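/- arXiv:2401.17900 — 5 statements merged into one kernel-verified Lean document; each statement's English description precedes it below -/
import Mathlib

section
/- Let (ν_n) be a sequence of finite nonnegative Borel measures on ℝ and ν a finite nonnegative Borel measure on ℝ. Assume there exists T > 0 such that for every t ∈ [0,T] the integrals ∫_ℝ e^{-λt} ν_n(dλ) (for every n) and ∫_ℝ e^{-λt} ν(dλ) are finite, and ∫_ℝ e^{-λt} ν_n(dλ) → ∫_ℝ e^{-λt} ν(dλ) as n → ∞. Then ν_n converges weakly to ν, i.e. ∫_ℝ f dν_n → ∫_ℝ f dν for every bounded continuous function f : ℝ → ℝ. -/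
open MeasureTheory Filter Topology

open ProbabilityTheory
open scoped BoundedContinuousFunction NNReal ZeroAtInfty

/-!
Divide the exponentials `e^{tx}`, `a ≤ t ≤ b`, by the weight `w(x) = e^{ax} + e^{bx}`. For interior
`t` the quotients vanish at infinity, and convergence at the two endpoints bounds the masses of the
measures `w νᵢ`. Along any ultrafilter these therefore converge vaguely, say to `w τ`, and `τ` has
the same moment generating function on `(a, b)` as `μ`. By analyticity on the strip `a < Re z < b`
and injectivity of the Fourier transform, `τ = μ`, so `νᵢ` converges vaguely to `μ`. When
`0 ∈ [a, b]` the total masses converge as well, so no mass escapes and the convergence is weak.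
-/

section WithDensity

variable {X : Type*} [MeasurableSpace X] {κ κ' : Measure X} {w : X → ℝ}

lemma integral_withDensity_ofReal (hw : Measurable w) (hw0 : ∀ x, 0 ≤ w x)
    {E : Type*} [NormedAddCommGroup E] [NormedSpace ℝ E] (g : X → E) :
    ∫ x, g x ∂κ.withDensity (fun x => ENNReal.ofReal (w x)) = ∫ x, w x • g x ∂κ := by
  rw [integral_withDensity_eq_integral_toReal_smul hw.ennreal_ofReal
    (ae_of_all _ fun _ => ENNReal.ofReal_lt_top)]
  simp only [ENNReal.toReal_ofReal (hw0 _)]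

lemma integrable_withDensity_ofReal_iff (hw : Measurable w) (hw0 : ∀ x, 0 ≤ w x)
    {E : Type*} [NormedAddCommGroup E] [NormedSpace ℝ E] {g : X → E} :
    Integrable g (κ.withDensity fun x => ENNReal.ofReal (w x)) ↔
      Integrable (fun x => w x • g x) κ := by
  rw [integrable_withDensity_iff_integrable_smul' hw.ennreal_ofReal
    (ae_of_all _ fun _ => ENNReal.ofReal_lt_top)]
  simp only [ENNReal.toReal_ofReal (hw0 _)]

lemma eq_of_withDensity_ofReal_eq (hw : Measurable w) (hw0 : ∀ x, 0 < w x)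
    (h : κ.withDensity (fun x => ENNReal.ofReal (w x)) =
      κ'.withDensity fun x => ENNReal.ofReal (w x)) :
    κ = κ' := by
  have undo (m : Measure X) : (m.withDensity fun x => ENNReal.ofReal (w x)).withDensity
      (fun x => (ENNReal.ofReal (w x))⁻¹) = m :=
    withDensity_inv_same hw.ennreal_ofReal
      (ae_of_all _ fun x => (ENNReal.ofReal_pos.2 (hw0 x)).ne')
      (ae_of_all _ fun _ => ENNReal.ofReal_ne_top)
  rw [← undo κ, h, undo]

end WithDensity

section VagueCompactness

variable {ι X : Type*} [TopologicalSpace X] [T2Space X] [LocallyCompactSpace X]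
  [MeasurableSpace X] [BorelSpace X]

lemma exists_tendsto_integral_zeroAtInfty (U : Ultrafilter ι) {ρ : ι → FiniteMeasure X} {C : ℝ≥0}
    (hC : ∀ᶠ i in U, (ρ i).mass ≤ C) :
    ∃ σ : FiniteMeasure X, ∀ g : C₀(X, ℝ),
      Tendsto (fun i => ∫ x, g x ∂(ρ i : Measure X)) U (𝓝 (∫ x, g x ∂(σ : Measure X))) := by
  let : MeasurableSpace (OnePoint X) := borel _
  have : BorelSpace (OnePoint X) := ⟨rfl⟩
  have coe_emb : MeasurableEmbedding ((↑) : X → OnePoint X) :=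
    OnePoint.isOpenEmbedding_coe.measurableEmbedding
  obtain ⟨Q, -, hQ : Tendsto (fun i => (ρ i).map ((↑) : X → OnePoint X)) U (𝓝 Q)⟩ :=
    (isCompact_setOfPred_finiteMeasure_le_of_compactSpace (OnePoint X) C).ultrafilter_le_nhds
      (U.map fun i => (ρ i).map (↑))
      (le_principal_iff.2 <| hC.mono fun i hi => (FiniteMeasure.mass_map_le _ _).trans hi)
  refine ⟨Q.comap (↑), fun g => ?_⟩
  let G : C(OnePoint X, ℝ) := OnePoint.continuousMapMk g 0 <|
    coclosedCompact_eq_cocompact (X := X) ▸ g.zero_at_infty'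
  have integral_Q : ∫ x, G x ∂(Q : Measure (OnePoint X)) =
      ∫ x, g x ∂(Q.comap ((↑) : X → OnePoint X) : Measure X) := by
    have G_eq_zero : ∀ y ∉ Set.range ((↑) : X → OnePoint X), G y = 0 := by
      intro y hy
      rw [OnePoint.notMem_range_coe_iff.1 hy]
      rfl
    calc ∫ y, G y ∂(Q : Measure (OnePoint X))
      _ = ∫ y in Set.range ((↑) : X → OnePoint X), G y ∂(Q : Measure (OnePoint X)) :=
        (setIntegral_eq_integral_of_forall_compl_eq_zero G_eq_zero).symm
      _ = ∫ x, G (x : OnePoint X) ∂(Q.comap ((↑) : X → OnePoint X) : Measure X) := by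
        rw [FiniteMeasure.toMeasure_comap, ← coe_emb.integral_map, coe_emb.map_comap]
  rw [← integral_Q]
  refine (FiniteMeasure.tendsto_iff_forall_integral_tendsto.1 hQ
    (BoundedContinuousFunction.mkOfCompact G)).congr fun i => ?_
  exact coe_emb.integral_map G

lemma exists_tendsto_integral_of_isLittleO (U : Ultrafilter ι) {κ : ι → Measure X} {w : X → ℝ}
    (hw : Continuous w) (hw0 : ∀ x, 0 < w x) (hκ : ∀ i, Integrable w (κ i)) {C : ℝ}
    (hC : ∀ᶠ i in U, ∫ x, w x ∂κ i ≤ C) :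
    ∃ τ : Measure X, Integrable w τ ∧ ∀ g : X → ℝ, Continuous g → g =o[cocompact X] w →
      Tendsto (fun i => ∫ x, g x ∂κ i) U (𝓝 (∫ x, g x ∂τ)) := by
  have hwinv : Continuous fun x => (w x)⁻¹ := hw.inv₀ fun x => (hw0 x).ne'
  have hwinv0 (x : X) : 0 ≤ (w x)⁻¹ := (inv_pos.2 (hw0 x)).le
  let ρ (i : ι) : FiniteMeasure X := ⟨(κ i).withDensity fun x => ENNReal.ofReal (w x),
    isFiniteMeasure_withDensity_ofReal (hκ i).2⟩
  have hρ : ∀ᶠ i in U, (ρ i).mass ≤ C.toNNReal := hC.mono fun i hi => by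
    rw [← ENNReal.coe_le_coe, FiniteMeasure.ennreal_mass]
    change (κ i).withDensity _ Set.univ ≤ ENNReal.ofReal C
    rw [withDensity_apply _ .univ, Measure.restrict_univ,
      ← ofReal_integral_eq_lintegral_ofReal (hκ i) (ae_of_all _ fun x => (hw0 x).le)]
    exact ENNReal.ofReal_le_ofReal hi
  obtain ⟨σ, hσ⟩ := exists_tendsto_integral_zeroAtInfty U hρ
  refine ⟨(σ : Measure X).withDensity fun x => ENNReal.ofReal (w x)⁻¹, ?_, fun g hg hgw => ?_⟩
  · rw [integrable_withDensity_ofReal_iff hwinv.measurable hwinv0]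
    simpa only [smul_eq_mul, inv_mul_cancel₀ (hw0 _).ne'] using integrable_const (1 : ℝ)
  · let q : C₀(X, ℝ) := ⟨⟨fun x => (w x)⁻¹ * g x, hwinv.mul hg⟩, by
      simpa only [div_eq_inv_mul] using hgw.tendsto_div_nhds_zero⟩
    rw [integral_withDensity_ofReal hwinv.measurable hwinv0]
    refine (hσ q).congr fun i => ?_
    refine (integral_withDensity_ofReal hw.measurable (fun x => (hw0 x).le) _).trans ?_
    exact integral_congr_ae (ae_of_all _ fun x => mul_inv_cancel_left₀ (hw0 x).ne' (g x))

end VagueCompactness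

section WeakOfVague

variable {X : Type*} [TopologicalSpace X] [MeasurableSpace X] [OpensMeasurableSpace X]

lemma abs_integral_sub_integral_mul_le {κ : Measure X} [IsFiniteMeasure κ] (f : X →ᵇ ℝ)
    {χ : C(X, ℝ)} (hχ : ∀ x, χ x ∈ Set.Icc 0 1) :
    |∫ x, f x ∂κ - ∫ x, f x * χ x ∂κ| ≤ ‖f‖ * (κ.real Set.univ - ∫ x, χ x ∂κ) := by
  have norm_χ_le (x : X) : ‖χ x‖ ≤ 1 := (Real.norm_of_nonneg (hχ x).1).trans_le (hχ x).2
  have hχint : Integrable χ κ :=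
    .of_bound χ.continuous.aestronglyMeasurable 1 (ae_of_all _ norm_χ_le)
  have hfχint : Integrable (fun x => f x * χ x) κ :=
    (f.integrable κ).mul_bdd χ.continuous.aestronglyMeasurable (ae_of_all _ norm_χ_le)
  calc |∫ x, f x ∂κ - ∫ x, f x * χ x ∂κ|
    _ = ‖∫ x, f x * (1 - χ x) ∂κ‖ := by
      rw [← integral_sub (f.integrable κ) hfχint, Real.norm_eq_abs]
      simp only [mul_sub, mul_one]
    _ ≤ ∫ x, ‖f‖ * (1 - χ x) ∂κ := by
      refine norm_integral_le_of_norm_le (((integrable_const 1).sub hχint).const_mul _)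
        (ae_of_all _ fun x => ?_)
      have one_sub_nonneg : 0 ≤ 1 - χ x := sub_nonneg.2 (hχ x).2
      rw [norm_mul, Real.norm_of_nonneg one_sub_nonneg]
      gcongr
      exact f.norm_coe_le_norm x
    _ = ‖f‖ * (κ.real Set.univ - ∫ x, χ x ∂κ) := by
      rw [integral_const_mul, integral_sub (integrable_const 1) hχint, integral_const, smul_eq_mul,
        mul_one]

variable [T2Space X] [LocallyCompactSpace X]

lemma exists_compactlySupported_measureReal_univ_sub_integral_le {μ : Measure X} [IsFiniteMeasure μ]
    (hμ : IsTightMeasureSet {μ}) {ε : ℝ} (hε : 0 < ε) :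
    ∃ χ : C(X, ℝ), HasCompactSupport χ ∧ (∀ x, χ x ∈ Set.Icc 0 1) ∧
      μ.real Set.univ - ∫ x, χ x ∂μ ≤ ε := by
  obtain ⟨K, hK, hKε⟩ := isTightMeasureSet_iff_exists_isCompact_measure_compl_le.1 hμ
    (ENNReal.ofReal ε) (ENNReal.ofReal_pos.2 hε)
  obtain ⟨χ, hχK, -, hχ, hχ01⟩ :=
    exists_continuous_one_zero_of_isCompact hK isClosed_empty (Set.disjoint_empty K)
  refine ⟨χ, hχ, hχ01, ?_⟩
  have hχint : Integrable χ μ := χ.continuous.integrable_of_hasCompactSupport hχ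
  have measure_le_integral : μ.real K ≤ ∫ x, χ x ∂μ := by
    rw [← integral_indicator_one hK.measurableSet]
    refine integral_mono ((integrable_const 1).indicator hK.measurableSet) hχint fun x => ?_
    exact Set.indicator_le' (fun x hx => (hχK hx).ge) (fun x _ => (hχ01 x).1) x
  have compl_le : μ.real Kᶜ ≤ ε :=
    ENNReal.toReal_le_of_le_ofReal hε.le (hKε μ rfl)
  linarith [measureReal_add_measureReal_compl (μ := μ) hK.measurableSet]

lemma tendsto_integral_of_compactlySupported_of_mass {ι : Type*} {l : Filter ι}
    {κ : ι → Measure X} {μ : Measure X} [∀ i, IsFiniteMeasure (κ i)] [IsFiniteMeasure μ]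
    (hμ : IsTightMeasureSet {μ})
    (hmass : Tendsto (fun i => (κ i).real Set.univ) l (𝓝 (μ.real Set.univ)))
    (hvague : ∀ g : X → ℝ, Continuous g → HasCompactSupport g →
      Tendsto (fun i => ∫ x, g x ∂κ i) l (𝓝 (∫ x, g x ∂μ)))
    (f : X →ᵇ ℝ) :
    Tendsto (fun i => ∫ x, f x ∂κ i) l (𝓝 (∫ x, f x ∂μ)) := by
  rw [Metric.tendsto_nhds]
  intro ε hε
  obtain ⟨χ, hχsupp, hχ01, hχμ⟩ := exists_compactlySupported_measureReal_univ_sub_integral_le hμ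
    (show 0 < ε / (2 * (‖f‖ + 1)) by positivity)
  let defect (m : Measure X) : ℝ := ‖f‖ * (m.real Set.univ - ∫ x, χ x ∂m)
  have defect_μ_lt : 2 * defect μ < ε := by
    calc 2 * defect μ
      _ ≤ 2 * (‖f‖ * (ε / (2 * (‖f‖ + 1)))) := by simp only [defect]; gcongr
      _ = ε * (‖f‖ / (‖f‖ + 1)) := by field_simp
      _ < ε := mul_lt_of_lt_one_right hε ((div_lt_one (by positivity)).2 (lt_add_one _))
  have defect_tendsto : Tendsto (fun i => defect (κ i)) l (𝓝 (defect μ)) :=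
    (hmass.sub (hvague χ χ.continuous hχsupp)).const_mul _
  have cutoff_tendsto : Tendsto (fun i => |∫ x, f x * χ x ∂κ i - ∫ x, f x * χ x ∂μ|) l (𝓝 0) :=
    tendsto_iff_norm_sub_tendsto_zero.1
      (hvague _ (f.continuous.mul χ.continuous) hχsupp.mul_left)
  have bound_tendsto : Tendsto (fun i => defect (κ i) +
      |∫ x, f x * χ x ∂κ i - ∫ x, f x * χ x ∂μ| + defect μ) l (𝓝 (2 * defect μ)) := by
    convert (defect_tendsto.add cutoff_tendsto).add_const (defect μ) using 2
    ring
  filter_upwards [bound_tendsto.eventually_lt_const defect_μ_lt] with i hi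
  have hκ : |∫ x, f x ∂κ i - ∫ x, f x * χ x ∂κ i| ≤ defect (κ i) :=
    abs_integral_sub_integral_mul_le f hχ01
  have hμ' : |∫ x, f x * χ x ∂μ - ∫ x, f x ∂μ| ≤ defect μ :=
    (abs_sub_comm _ _).trans_le (abs_integral_sub_integral_mul_le f hχ01)
  calc dist (∫ x, f x ∂κ i) (∫ x, f x ∂μ)
    _ ≤ |∫ x, f x ∂κ i - ∫ x, f x * χ x ∂κ i| +
        |∫ x, f x * χ x ∂κ i - ∫ x, f x * χ x ∂μ| + |∫ x, f x * χ x ∂μ - ∫ x, f x ∂μ| :=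
      dist_triangle4 _ _ _ _
    _ ≤ defect (κ i) + |∫ x, f x * χ x ∂κ i - ∫ x, f x * χ x ∂μ| + defect μ := by gcongr
    _ < ε := hi

end WeakOfVague

section MomentGeneratingFunction

variable {ι : Type*} {l : Filter ι} {κ κ' μ : Measure ℝ} {ν : ι → Measure ℝ} {a b t : ℝ}

lemma eqOn_complexMGF_of_eqOn_mgf (hκ : Set.Ioo a b ⊆ integrableExpSet id κ)
    (hκ' : Set.Ioo a b ⊆ integrableExpSet id κ')
    (h : Set.EqOn (mgf id κ) (mgf id κ') (Set.Ioo a b)) :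
    Set.EqOn (complexMGF id κ) (complexMGF id κ') {z | z.re ∈ Set.Ioo a b} := by
  intro z hz
  have analytic_on_strip {m : Measure ℝ} (hm : Set.Ioo a b ⊆ integrableExpSet id m) :
      AnalyticOnNhd ℂ (complexMGF id m) {z | z.re ∈ Set.Ioo a b} :=
    analyticOnNhd_complexMGF.mono fun _ hw => interior_maximal hm isOpen_Ioo hw
  have strip_preconnected : IsPreconnected {z : ℂ | z.re ∈ Set.Ioo a b} :=
    ((convex_Ioo a b).linear_preimage Complex.reLm).isPreconnected
  have ofReal_tendsto : Tendsto ((↑) : ℝ → ℂ) (𝓝[≠] z.re) (𝓝[≠] (z.re : ℂ)) :=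
    Complex.continuous_ofReal.continuousWithinAt.tendsto_nhdsWithin
      fun _ hx => Complex.ofReal_injective.ne hx
  have eq_near_re : ∀ᶠ x : ℝ in 𝓝[≠] z.re, complexMGF id κ x = complexMGF id κ' x := by
    filter_upwards [mem_nhdsWithin_of_mem_nhds (isOpen_Ioo.mem_nhds hz)] with x hx
    rw [complexMGF_ofReal, complexMGF_ofReal, h hx]
  exact (analytic_on_strip hκ).eqOn_of_preconnected_of_frequently_eq (analytic_on_strip hκ')
    strip_preconnected (z₀ := (z.re : ℂ)) hz (ofReal_tendsto.frequently eq_near_re.frequently) hz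

lemma charFun_withDensity_exp (κ : Measure ℝ) (c s : ℝ) :
    charFun (κ.withDensity fun x => ENNReal.ofReal (Real.exp (c * x))) s =
      complexMGF id κ (c + s * Complex.I) := by
  rw [charFun_apply_real,
    integral_withDensity_ofReal (by fun_prop) (fun x => (Real.exp_pos _).le), complexMGF]
  refine integral_congr_ae (ae_of_all _ fun x => ?_)
  simp only [Complex.real_smul, Complex.ofReal_exp, ← Complex.exp_add, id]
  push_cast
  ring_nf

lemma ext_of_eqOn_mgf_Ioo (hab : a < b) (hκ : Set.Ioo a b ⊆ integrableExpSet id κ)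
    (hκ' : Set.Ioo a b ⊆ integrableExpSet id κ')
    (h : Set.EqOn (mgf id κ) (mgf id κ') (Set.Ioo a b)) :
    κ = κ' := by
  obtain ⟨c, hc⟩ := Set.nonempty_Ioo.2 hab
  have : IsFiniteMeasure (κ.withDensity fun x => ENNReal.ofReal (Real.exp (c * x))) :=
    isFiniteMeasure_withDensity_ofReal (hκ hc).2
  have : IsFiniteMeasure (κ'.withDensity fun x => ENNReal.ofReal (Real.exp (c * x))) :=
    isFiniteMeasure_withDensity_ofReal (hκ' hc).2
  refine eq_of_withDensity_ofReal_eq (w := fun x => Real.exp (c * x)) (by fun_prop)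
    (fun x => Real.exp_pos _) (Measure.ext_of_charFun ?_)
  ext s
  rw [charFun_withDensity_exp, charFun_withDensity_exp]
  exact eqOn_complexMGF_of_eqOn_mgf hκ hκ' h (by simpa using hc)

/-- The weight `e^{ax} + e^{bx}` by which measures on `ℝ` are multiplied, so that bounds on their
moment generating functions at `a` and `b` become bounds on total masses. -/
noncomputable def expWeight (a b x : ℝ) : ℝ := Real.exp (a * x) + Real.exp (b * x)

lemma expWeight_pos (a b x : ℝ) : 0 < expWeight a b x :=
  add_pos (Real.exp_pos _) (Real.exp_pos _)

lemma exp_left_le_expWeight (a b x : ℝ) : Real.exp (a * x) ≤ expWeight a b x :=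
  le_add_of_nonneg_right (Real.exp_pos _).le

lemma exp_right_le_expWeight (a b x : ℝ) : Real.exp (b * x) ≤ expWeight a b x :=
  le_add_of_nonneg_left (Real.exp_pos _).le

lemma continuous_expWeight (a b : ℝ) : Continuous (expWeight a b) := by
  unfold expWeight
  fun_prop

lemma exp_mul_isLittleO_expWeight (ht : t ∈ Set.Ioo a b) :
    (fun x => Real.exp (t * x)) =o[cocompact ℝ] expWeight a b := by
  have isLittleO_of_dominated {l : Filter ℝ} {c : ℝ}
      (hc : ∀ x, Real.exp (c * x) ≤ expWeight a b x)
      (hl : Tendsto (fun x => (c - t) * x) l atTop) :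
      (fun x => Real.exp (t * x)) =o[l] expWeight a b := by
    have exp_isLittleO : (fun x => Real.exp (t * x)) =o[l] fun x => Real.exp (c * x) :=
      Real.isLittleO_exp_comp_exp_comp.2 (by simpa only [sub_mul] using hl)
    refine exp_isLittleO.trans_le fun x => ?_
    rw [Real.norm_of_nonneg (Real.exp_pos _).le, Real.norm_of_nonneg (expWeight_pos a b x).le]
    exact hc x
  rw [cocompact_eq_atBot_atTop, Asymptotics.isLittleO_sup]
  exact ⟨isLittleO_of_dominated (exp_left_le_expWeight a b)
      (tendsto_id.const_mul_atBot_of_neg (sub_neg.2 ht.1)),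
    isLittleO_of_dominated (exp_right_le_expWeight a b)
      (tendsto_id.const_mul_atTop (sub_pos.2 ht.2))⟩

lemma Icc_subset_integrableExpSet_of_integrable_expWeight (h : Integrable (expWeight a b) κ) :
    Set.Icc a b ⊆ integrableExpSet id κ := by
  have integrable_of_dominated {c : ℝ} (hc : ∀ x, Real.exp (c * x) ≤ expWeight a b x) :
      Integrable (fun x => Real.exp (c * x)) κ :=
    h.mono' (by fun_prop) (ae_of_all _ fun x =>
      (Real.norm_of_nonneg (Real.exp_pos _).le).trans_le (hc x))
  exact fun t ht => integrable_exp_mul_of_le_of_le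
    (integrable_of_dominated (exp_left_le_expWeight a b))
    (integrable_of_dominated (exp_right_le_expWeight a b)) ht.1 ht.2

lemma tendsto_integral_of_isLittleO_of_tendsto_mgf (hab : a < b)
    (hν : ∀ i, Set.Icc a b ⊆ integrableExpSet id (ν i)) (hμ : Set.Icc a b ⊆ integrableExpSet id μ)
    (h : ∀ t ∈ Set.Icc a b, Tendsto (fun i => mgf id (ν i) t) l (𝓝 (mgf id μ t)))
    {g : ℝ → ℝ} (hg : Continuous g) (hgw : g =o[cocompact ℝ] expWeight a b) :
    Tendsto (fun i => ∫ x, g x ∂ν i) l (𝓝 (∫ x, g x ∂μ)) := by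
  have ha : a ∈ Set.Icc a b := Set.left_mem_Icc.2 hab.le
  have hb : b ∈ Set.Icc a b := Set.right_mem_Icc.2 hab.le
  have weight_tendsto : Tendsto (fun i => ∫ x, expWeight a b x ∂ν i) l
      (𝓝 (mgf id μ a + mgf id μ b)) :=
    ((h a ha).add (h b hb)).congr fun i => (integral_add (hν i ha) (hν i hb)).symm
  rw [tendsto_iff_ultrafilter]
  intro U hU
  obtain ⟨τ, hτ, hlim⟩ := exists_tendsto_integral_of_isLittleO U (continuous_expWeight a b)
    (expWeight_pos a b) (fun i => (hν i ha).add (hν i hb))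
    ((weight_tendsto.mono_left hU).eventually_le_const (lt_add_one _))
  have mgf_eq : Set.EqOn (mgf id μ) (mgf id τ) (Set.Ioo a b) := fun t ht =>
    tendsto_nhds_unique ((h t (Set.Ioo_subset_Icc_self ht)).mono_left hU)
      (hlim _ (by fun_prop) (exp_mul_isLittleO_expWeight ht))
  have μ_eq_τ : μ = τ := ext_of_eqOn_mgf_Ioo hab (Set.Ioo_subset_Icc_self.trans hμ)
    (Set.Ioo_subset_Icc_self.trans (Icc_subset_integrableExpSet_of_integrable_expWeight hτ)) mgf_eq
  exact μ_eq_τ ▸ hlim g hg hgw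

theorem laplace_transform_convergence_implies_weak_convergence_general
    (hab : a < b) (h0 : 0 ∈ Set.Icc a b)
    (hν : ∀ i, Set.Icc a b ⊆ integrableExpSet id (ν i)) (hμ : Set.Icc a b ⊆ integrableExpSet id μ)
    (h : ∀ t ∈ Set.Icc a b, Tendsto (fun i => mgf id (ν i) t) l (𝓝 (mgf id μ t)))
    (f : ℝ →ᵇ ℝ) :
    Tendsto (fun i => ∫ x, f x ∂ν i) l (𝓝 (∫ x, f x ∂μ)) := by
  have finite_of_subset {m : Measure ℝ} (hm : Set.Icc a b ⊆ integrableExpSet id m) :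
      IsFiniteMeasure m := by
    simpa [integrableExpSet, integrable_const_iff] using hm h0
  have (i : ι) : IsFiniteMeasure (ν i) := finite_of_subset (hν i)
  have : IsFiniteMeasure μ := finite_of_subset hμ
  refine tendsto_integral_of_compactlySupported_of_mass isTightMeasureSet_singleton
    (by simpa only [mgf_zero'] using h 0 h0) (fun g hg hgsupp => ?_) f
  have g_eventually_zero : g =ᶠ[cocompact ℝ] 0 :=
    hasCompactSupport_iff_eventuallyEq.1 hgsupp |>.filter_mono cocompact_le_coclosedCompact
  exact tendsto_integral_of_isLittleO_of_tendsto_mgf hab hν hμ h hg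
    (g_eventually_zero.trans_isLittleO (Asymptotics.isLittleO_zero _ _))

end MomentGeneratingFunction

theorem laplace_transform_convergence_implies_weak_convergence
    (ν : ℕ → Measure ℝ) (μ : Measure ℝ)
    (hν : ∀ n, IsFiniteMeasure (ν n)) (hμ : IsFiniteMeasure μ)
    (h : ∃ T > (0:ℝ), ∀ t ∈ Set.Icc (0:ℝ) T,
      (∀ n, Integrable (fun l => Real.exp (-l * t)) (ν n)) ∧
      Integrable (fun l => Real.exp (-l * t)) μ ∧
      Tendsto (fun n => ∫ l, Real.exp (-l * t) ∂(ν n)) atTop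
        (𝓝 (∫ l, Real.exp (-l * t) ∂μ))) :
    ∀ f : BoundedContinuousFunction ℝ ℝ,
      Tendsto (fun n => ∫ x, f x ∂(ν n)) atTop (𝓝 (∫ x, f x ∂μ)) := by
  obtain ⟨T, hT, h⟩ := h
  have h' (t : ℝ) (ht : t ∈ Set.Icc (-T) 0) := h (-t) ⟨neg_nonneg.2 ht.2, neg_le.1 ht.1⟩
  simp only [neg_mul_neg, mul_comm] at h'
  exact laplace_transform_convergence_implies_weak_convergence_general (neg_lt_zero.2 hT)
    ⟨(neg_lt_zero.2 hT).le, le_rfl⟩ (fun n t ht => (h' t ht).1 n) (fun t ht => (h' t ht).2.1)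
    fun t ht => (h' t ht).2.2
end

section
/- Let U ⊆ ℂ be open and connected, let (g_n) be a sequence of functions holomorphic on U which is uniformly bounded on U (there exists M such that |g_n(z)| ≤ M for all n and all z ∈ U), let g be holomorphic on U, and let S ⊆ U be a set having an accumulation point belonging to U. If g_n(z) → g(z) as n → ∞ for every z ∈ S, then g_n → g locally uniformly on U. -/
/-! By the Schwarz lemma a locally bounded family of holomorphic functions is equicontinuous, so
pointwise convergence of such a family already implies locally uniform convergence. Pointwise
convergence can be tested along ultrafilters. Along an ultrafilter, boundedness provides a pointwise
limit, which is therefore a locally uniform limit and hence holomorphic; it agrees with the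
prescribed limit on a set accumulating in the domain, so everywhere by the identity theorem. -/

open Filter Topology

section Compactness

variable {ι X α : Type*}

lemma exists_tendsto_ultrafilter_of_isBounded_range [PseudoMetricSpace α] [ProperSpace α]
    {x : ι → α} (hx : Bornology.IsBounded (Set.range x)) (u : Ultrafilter ι) :
    ∃ a, Tendsto x u (𝓝 a) := by
  have hmem : closure (Set.range x) ∈ u.map x :=
    Ultrafilter.mem_map.2 <| univ_mem' fun i => subset_closure (Set.mem_range_self i)
  obtain ⟨a, -, ha⟩ := hx.isCompact_closure.ultrafilter_le_nhds' (u.map x) hmem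
  exact ⟨a, ha⟩

lemma tendstoLocallyUniformlyOn_of_equicontinuousOn [TopologicalSpace X] [LocallyCompactSpace X]
    [UniformSpace α] {F : ι → X → α} {f : X → α} {l : Filter ι} {U : Set X} (hU : IsOpen U)
    (hF : EquicontinuousOn F U) (hlim : ∀ x ∈ U, Tendsto (F · x) l (𝓝 (f x))) :
    TendstoLocallyUniformlyOn F f l U := by
  rw [tendstoLocallyUniformlyOn_iff_forall_isCompact hU]
  intro K hKU hK
  have hlimK : Tendsto ((⋃₀ {K}).domRestrict ∘ F) l (𝓝 ((⋃₀ {K}).domRestrict f)) :=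
    tendsto_pi_nhds.2 fun x => hlim x (hKU ((Set.sUnion_singleton K).subset x.2))
  have huniform := (EquicontinuousOn.tendsto_uniformOnFun_iff_pi' (𝔖 := {K})
    (by rintro _ rfl; exact hK) (by rintro _ rfl; exact hF.mono hKU) l f).2 hlimK
  exact UniformOnFun.tendsto_iff_tendstoUniformlyOn.1 huniform K rfl

end Compactness

/-- The family `F` is locally bounded on `U`: each point of `U` has a relative neighbourhood in `U`
on which all members of `F` admit a common bound. This is the boundedness hypothesis of Montel's
theorem. -/
def IsLocallyBoundedFamilyOn {ι X E : Type*} [TopologicalSpace X] [Norm E]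
    (F : ι → X → E) (U : Set X) : Prop :=
  ∀ x ∈ U, ∃ M : ℝ, ∀ᶠ y in 𝓝[U] x, ∀ i, ‖F i y‖ ≤ M

lemma IsLocallyBoundedFamilyOn.isBounded_range {ι X E : Type*} [TopologicalSpace X]
    [SeminormedAddCommGroup E] {F : ι → X → E} {U : Set X} (hF : IsLocallyBoundedFamilyOn F U)
    {x : X} (hx : x ∈ U) : Bornology.IsBounded (Set.range (F · x)) := by
  obtain ⟨M, hM⟩ := hF x hx
  exact isBounded_iff_forall_norm_le.2 ⟨M, Set.forall_mem_range.2 (hM.self_of_nhdsWithin hx)⟩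

section Holomorphic

variable {ι D E : Type*} [NormedAddCommGroup D] [NormedSpace ℂ D]
  [NormedAddCommGroup E] [NormedSpace ℂ E]

lemma equicontinuousAt_of_differentiableAt_of_norm_le {F : ι → D → E} {c : D} {M : ℝ}
    (hd : ∀ᶠ z in 𝓝 c, ∀ i, DifferentiableAt ℂ (F i) z)
    (hM : ∀ᶠ z in 𝓝 c, ∀ i, ‖F i z‖ ≤ M) : EquicontinuousAt F c := by
  obtain ⟨R, hR, hball⟩ := Metric.eventually_nhds_iff_ball.1 (hd.and hM)
  have hmaps (i : ι) :
      Set.MapsTo (F i) (Metric.ball c R) (Metric.closedBall (F i c) (M + M)) := fun z hz =>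
    (dist_le_norm_add_norm _ _).trans
      (add_le_add ((hball z hz).2 i) ((hball c (Metric.mem_ball_self hR)).2 i))
  have hschwarz : ∀ z ∈ Metric.ball c R, ∀ i, dist (F i c) (F i z) ≤ (M + M) / R * dist z c :=
    fun z hz i => (dist_comm _ _).trans_le <| Complex.dist_le_div_mul_dist_of_mapsTo_ball
      (fun w hw => ((hball w hw).1 i).differentiableWithinAt) (hmaps i) hz
  refine Metric.equicontinuousAt_of_continuity_modulus (fun z => (M + M) / R * dist z c) ?_ F
    (eventually_of_mem (Metric.ball_mem_nhds c hR) hschwarz)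
  exact Continuous.tendsto' (by fun_prop) c 0 (by rw [dist_self, mul_zero])

lemma IsLocallyBoundedFamilyOn.equicontinuousOn {F : ι → D → E} {U : Set D}
    (hF : IsLocallyBoundedFamilyOn F U) (hU : IsOpen U) (hd : ∀ i, DifferentiableOn ℂ (F i) U) :
    EquicontinuousOn F U := by
  intro c hc
  obtain ⟨M, hM⟩ := hF c hc
  rw [hU.nhdsWithin_eq hc] at hM
  have hdc : ∀ᶠ z in 𝓝 c, ∀ i, DifferentiableAt ℂ (F i) z :=
    (hU.eventually_mem hc).mono fun z hz i => (hd i).differentiableAt (hU.mem_nhds hz)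
  exact (equicontinuousAt_of_differentiableAt_of_norm_le hdc hM).equicontinuousWithinAt U

variable [ProperSpace E] {F : ι → ℂ → E} {U : Set ℂ}

/-- **Montel's theorem**, with an ultrafilter in place of the extraction of a subsequence. -/
lemma IsLocallyBoundedFamilyOn.exists_tendstoLocallyUniformlyOn_ultrafilter
    (hF : IsLocallyBoundedFamilyOn F U) (hU : IsOpen U) (hd : ∀ i, DifferentiableOn ℂ (F i) U)
    (u : Ultrafilter ι) :
    ∃ h : ℂ → E, DifferentiableOn ℂ h U ∧ TendstoLocallyUniformlyOn F h u U := by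
  have hpointwise : ∀ z ∈ U, ∃ a, Tendsto (F · z) u (𝓝 a) := fun _ hz =>
    exists_tendsto_ultrafilter_of_isBounded_range (hF.isBounded_range hz) u
  choose! h hh using hpointwise
  have hlim : TendstoLocallyUniformlyOn F h u U :=
    tendstoLocallyUniformlyOn_of_equicontinuousOn hU (hF.equicontinuousOn hU hd) hh
  exact ⟨h, hlim.differentiableOn (Eventually.of_forall hd) hU, hlim⟩

theorem vitali_uniformly_bounded_holomorphic_general (hU : IsOpen U) (hUconn : IsPreconnected U)
    (hd : ∀ i, DifferentiableOn ℂ (F i) U) (hF : IsLocallyBoundedFamilyOn F U)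
    {f : ℂ → E} (hf : DifferentiableOn ℂ f U) {l : Filter ι} {z₀ : ℂ} (hz₀ : z₀ ∈ U)
    (hconv : ∃ᶠ z in 𝓝[≠] z₀, Tendsto (F · z) l (𝓝 (f z))) :
    TendstoLocallyUniformlyOn F f l U := by
  refine tendstoLocallyUniformlyOn_of_equicontinuousOn hU (hF.equicontinuousOn hU hd) fun z hz => ?_
  rw [tendsto_iff_ultrafilter]
  intro u hu
  obtain ⟨h, hh, hlim⟩ := hF.exists_tendstoLocallyUniformlyOn_ultrafilter hU hd u
  have hmem : ∀ᶠ w in 𝓝[≠] z₀, w ∈ U := (hU.eventually_mem hz₀).filter_mono nhdsWithin_le_nhds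
  have hfreq : ∃ᶠ w in 𝓝[≠] z₀, h w = f w :=
    (hconv.and_eventually hmem).mono fun w ⟨hw, hwU⟩ =>
      tendsto_nhds_unique (hlim.tendsto_at hwU) (hw.mono_left hu)
  have heq : Set.EqOn h f U := (hh.analyticOnNhd hU).eqOn_of_preconnected_of_frequently_eq
    (hf.analyticOnNhd hU) hUconn hz₀ hfreq
  exact heq hz ▸ hlim.tendsto_at hz

end Holomorphic

theorem vitali_uniformly_bounded_holomorphic
    (U : Set ℂ) (hU : IsOpen U) (hUconn : IsConnected U)
    (g : ℕ → ℂ → ℂ) (hg : ∀ n, DifferentiableOn ℂ (g n) U)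
    (M : ℝ) (hM : ∀ n, ∀ z ∈ U, ‖g n z‖ ≤ M)
    (f : ℂ → ℂ) (hf : DifferentiableOn ℂ f U)
    (S : Set ℂ) (hS : S ⊆ U)
    (z₀ : ℂ) (hz₀U : z₀ ∈ U) (hz₀acc : AccPt z₀ (principal S))
    (hconv : ∀ z ∈ S, Tendsto (fun n => g n z) atTop (𝓝 (f z))) :
    TendstoLocallyUniformlyOn (fun n => g n) f atTop U :=
  vitali_uniformly_bounded_holomorphic_general hU hUconn.isPreconnected hg
    (fun _ _ => ⟨M, eventually_mem_nhdsWithin.mono fun z hz n => hM n z hz⟩) hf hz₀U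
    ((accPt_iff_frequently_nhdsNE.1 hz₀acc).mono hconv)
end

section
/- There exists a constant C > 0 such that for every x ∈ ℝ² with x ≠ 0 and every δ ∈ (0,1]: |∇G(x)| ≤ C/|x| and |∇G_δ(x)| ≤ C/|x|. -/
open MeasureTheory

/-- `G(x) = -(2π)⁻¹ log|x| χ(x)` (note `Real.log 0 = 0`, so `G 0 = 0`). -/
noncomputable def Gfun (χ : EuclideanSpace ℝ (Fin 2) → ℝ)
    (x : EuclideanSpace ℝ (Fin 2)) : ℝ :=
  -(2 * Real.pi)⁻¹ * Real.log ‖x‖ * χ x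

/-- The mollifier `ρ_δ(x) = δ⁻² ρ(x/δ)`. -/
noncomputable def mollify (ρ : EuclideanSpace ℝ (Fin 2) → ℝ) (δ : ℝ)
    (x : EuclideanSpace ℝ (Fin 2)) : ℝ :=
  δ⁻¹ ^ 2 * ρ (δ⁻¹ • x)

/-- The mollified Green function `G_δ = G * ρ_δ`. -/
noncomputable def Gmol (χ ρ : EuclideanSpace ℝ (Fin 2) → ℝ) (δ : ℝ)
    (x : EuclideanSpace ℝ (Fin 2)) : ℝ :=
  ∫ y, Gfun χ (x - y) * mollify ρ δ y

/-!
Call `f` inverse-norm Lipschitz with constant `C` if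
`|f a - f b| ≤ C |a - b| (1 / |a| + 1 / |b|)` away from the origin. Letting `b → a` gives
`|∇f(a)| ≤ 2 C / |a|`. The logarithm of the norm has this property, multiplying by a Lipschitz
cutoff preserves it, and so does convolving with any `η` for which
`|x| ∫ |x - y|⁻¹ |η(y)| dy` is bounded in `x`. The last quantity is invariant under the scaling
`η ↦ η_δ`, so the bound for `G_δ` is uniform in `δ`, and no differentiation under the integral sign
is needed.
-/

section InvNormLipschitz

open Filter
open scoped NNReal Topology

/-- `f` satisfies `‖f a - f b‖ ≤ C ‖a - b‖ (‖a‖⁻¹ + ‖b‖⁻¹)` off the origin: the two-point form of a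
gradient bound of order `‖x‖⁻¹`, stable under averaging. The origin has to be excluded because
there `‖0‖⁻¹ = 0`. -/
def InvNormLipschitzWith {E F : Type*} [NormedAddCommGroup E] [NormedAddCommGroup F]
    (C : ℝ≥0) (f : E → F) : Prop :=
  ∀ a b, a ≠ 0 → b ≠ 0 → ‖f a - f b‖ ≤ C * ‖a - b‖ * (‖a‖⁻¹ + ‖b‖⁻¹)

theorem InvNormLipschitzWith.norm_fderiv_le {E F : Type*}
    [NormedAddCommGroup E] [NormedSpace ℝ E] [NormedAddCommGroup F] [NormedSpace ℝ F]
    {C : ℝ≥0} {f : E → F} (hf : InvNormLipschitzWith C f) {x : E} (hx : x ≠ 0) :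
    ‖fderiv ℝ f x‖ ≤ 2 * C / ‖x‖ := by
  refine le_of_forall_gt_imp_ge_of_dense fun K hK ↦ norm_fderiv_le_of_lip' ℝ ?_ ?_
  · exact le_trans (by positivity) hK.le
  have hlim : Tendsto (fun y ↦ C * (‖y‖⁻¹ + ‖x‖⁻¹)) (𝓝 x) (𝓝 (C * (‖x‖⁻¹ + ‖x‖⁻¹))) :=
    ((tendsto_id.norm.inv₀ (norm_ne_zero_iff.2 hx)).add_const _).const_mul _
  have hlim_lt : C * (‖x‖⁻¹ + ‖x‖⁻¹) < K := by
    rwa [← two_mul, ← mul_assoc, mul_comm (C : ℝ), ← div_eq_mul_inv]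
  filter_upwards [hlim.eventually_lt_const hlim_lt, isOpen_ne.mem_nhds hx] with y hyK hy
  calc ‖f y - f x‖ ≤ C * ‖y - x‖ * (‖y‖⁻¹ + ‖x‖⁻¹) := hf y x hy hx
    _ = C * (‖y‖⁻¹ + ‖x‖⁻¹) * ‖y - x‖ := by ring
    _ ≤ K * ‖y - x‖ := by gcongr

theorem InvNormLipschitzWith.norm_gradient_le {E : Type*}
    [NormedAddCommGroup E] [InnerProductSpace ℝ E] [CompleteSpace E]
    {C : ℝ≥0} {f : E → ℝ} (hf : InvNormLipschitzWith C f) {x : E} (hx : x ≠ 0) :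
    ‖gradient f x‖ ≤ 2 * C / ‖x‖ := by
  rw [gradient, LinearIsometryEquiv.norm_map]
  exact hf.norm_fderiv_le hx

variable {E : Type*} [NormedAddCommGroup E]

theorem InvNormLipschitzWith.mul_lipschitzWith {A B L M : ℝ≥0} {f g : E → ℝ}
    (hf : InvNormLipschitzWith A f) (hg : LipschitzWith L g) (hgM : ∀ x, ‖g x‖ ≤ M)
    (hfB : ∀ x, g x ≠ 0 → ‖f x‖ ≤ B * ‖x‖⁻¹) :
    InvNormLipschitzWith (A * M + B * L) fun x ↦ f x * g x := by
  have variation_g : ∀ x y, g x ≠ 0 → ‖f x * (g x - g y)‖ ≤ B * ‖x‖⁻¹ * (L * ‖x - y‖) := by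
    intro x y hx
    rw [norm_mul]
    exact mul_le_mul (hfB x hx) (hg.norm_sub_le x y) (norm_nonneg _) (by positivity)
  intro a b ha hb
  push_cast
  by_cases hga : g a = 0
  · by_cases hgb : g b = 0
    · simp only [hga, hgb, mul_zero, sub_zero, norm_zero]
      positivity
    · calc ‖f a * g a - f b * g b‖ = ‖f b * (g b - g a)‖ := by simp [hga]
        _ ≤ B * ‖b‖⁻¹ * (L * ‖b - a‖) := variation_g b a hgb
        _ = B * L * ‖a - b‖ * ‖b‖⁻¹ := by rw [norm_sub_rev]; ring
        _ ≤ (A * M + B * L) * ‖a - b‖ * (‖a‖⁻¹ + ‖b‖⁻¹) := by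
          gcongr
          · exact le_add_of_nonneg_left (by positivity)
          · exact le_add_of_nonneg_left (by positivity)
  · calc ‖f a * g a - f b * g b‖ = ‖(f a - f b) * g b + f a * (g a - g b)‖ := by ring_nf
      _ ≤ ‖(f a - f b) * g b‖ + ‖f a * (g a - g b)‖ := norm_add_le _ _
      _ ≤ A * ‖a - b‖ * (‖a‖⁻¹ + ‖b‖⁻¹) * M + B * ‖a‖⁻¹ * (L * ‖a - b‖) := by
        gcongr
        · rw [norm_mul]
          exact mul_le_mul (hf a b ha hb) (hgM b) (norm_nonneg _) (by positivity)
        · exact variation_g a b hga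
      _ ≤ A * ‖a - b‖ * (‖a‖⁻¹ + ‖b‖⁻¹) * M +
          B * (‖a‖⁻¹ + ‖b‖⁻¹) * (L * ‖a - b‖) := by
        gcongr
        exact le_add_of_nonneg_right (by positivity)
      _ = (A * M + B * L) * ‖a - b‖ * (‖a‖⁻¹ + ‖b‖⁻¹) := by ring

theorem log_sub_log_le_sub_mul_inv {s t : ℝ} (hs : 0 < s) (ht : 0 < t) :
    Real.log t - Real.log s ≤ (t - s) * s⁻¹ := by
  rw [← Real.log_div ht.ne' hs.ne']
  calc Real.log (t / s) ≤ t / s - 1 := Real.log_le_sub_one_of_pos (div_pos ht hs)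
    _ = (t - s) * s⁻¹ := by field_simp

theorem invNormLipschitzWith_log_norm : InvNormLipschitzWith 1 fun x : E ↦ Real.log ‖x‖ := by
  have one_sided : ∀ a b : E, a ≠ 0 → b ≠ 0 →
      Real.log ‖a‖ - Real.log ‖b‖ ≤ ‖a - b‖ * (‖a‖⁻¹ + ‖b‖⁻¹) := by
    intro a b ha hb
    calc Real.log ‖a‖ - Real.log ‖b‖ ≤ (‖a‖ - ‖b‖) * ‖b‖⁻¹ :=
          log_sub_log_le_sub_mul_inv (norm_pos_iff.2 hb) (norm_pos_iff.2 ha)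
      _ ≤ ‖a - b‖ * (‖a‖⁻¹ + ‖b‖⁻¹) := by
        gcongr
        · exact norm_sub_norm_le a b
        · exact le_add_of_nonneg_left (by positivity)
  intro a b ha hb
  rw [NNReal.coe_one, one_mul, Real.norm_eq_abs, abs_sub_le_iff]
  refine ⟨one_sided a b ha hb, ?_⟩
  rw [norm_sub_rev, add_comm]
  exact one_sided b a hb ha

theorem exists_abs_log_norm_le_of_isBounded {s : Set E} (hs : Bornology.IsBounded s) :
    ∃ B : ℝ≥0, ∀ x ∈ s, |Real.log ‖x‖| ≤ B * ‖x‖⁻¹ := by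
  obtain ⟨R, hR⟩ := hs.exists_norm_le
  refine ⟨R.nnabs ^ 2 + 1, fun x hx ↦ ?_⟩
  have norm_le : ‖x‖ ≤ R ^ 2 * ‖x‖⁻¹ := by
    rcases eq_or_ne x 0 with rfl | hx0
    · simp
    · rw [← div_eq_mul_inv, le_div_iff₀ (norm_pos_iff.2 hx0), ← sq]
      gcongr
      exact hR x hx
  have inv_nonneg : 0 ≤ ‖x‖⁻¹ := by positivity
  push_cast [Real.coe_nnabs, sq_abs]
  rw [abs_le]
  constructor <;>
    linarith [Real.log_le_self (norm_nonneg x), Real.neg_inv_le_log (norm_nonneg x),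
      norm_nonneg x]

theorem exists_invNormLipschitzWith_log_norm_mul {g : E → ℝ} {L : ℝ≥0} (hg : LipschitzWith L g)
    (hgsupp : HasCompactSupport g) :
    ∃ C, InvNormLipschitzWith C fun x ↦ Real.log ‖x‖ * g x := by
  obtain ⟨M, hM⟩ := hgsupp.exists_bound_of_continuous hg.continuous
  obtain ⟨B, hB⟩ := exists_abs_log_norm_le_of_isBounded hgsupp.isCompact.isBounded
  exact ⟨_, invNormLipschitzWith_log_norm.mul_lipschitzWith hg
    (fun x ↦ (hM x).trans M.le_coe_toNNReal) fun x hx ↦ hB x (subset_tsupport g hx)⟩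

theorem exists_abs_log_norm_mul_le {g : E → ℝ} (hg : Continuous g) (hgsupp : HasCompactSupport g) :
    ∃ B : ℝ, ∀ x, |Real.log ‖x‖ * g x| ≤ B * ‖x‖⁻¹ := by
  obtain ⟨M, hM⟩ := hgsupp.exists_bound_of_continuous hg
  obtain ⟨B, hB⟩ := exists_abs_log_norm_le_of_isBounded hgsupp.isCompact.isBounded
  refine ⟨B * M, fun x ↦ ?_⟩
  by_cases hx : g x = 0
  · have : 0 ≤ M := (norm_nonneg _).trans (hM 0)
    rw [hx, mul_zero, abs_zero]
    positivity
  · calc |Real.log ‖x‖ * g x| = |Real.log ‖x‖| * ‖g x‖ := abs_mul _ _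
      _ ≤ B * ‖x‖⁻¹ * M :=
        mul_le_mul (hB x (subset_tsupport g hx)) (hM x) (norm_nonneg _) (by positivity)
      _ = B * M * ‖x‖⁻¹ := by ring

end InvNormLipschitz

section Potential

open scoped NNReal

variable {E : Type*} [NormedAddCommGroup E]

theorem inv_norm_le_one_add_indicator (z : E) :
    ‖z‖⁻¹ ≤ 1 + (Metric.ball 0 1).indicator (fun z : E ↦ ‖z‖⁻¹) z := by
  by_cases hz : z ∈ Metric.ball (0 : E) 1
  · rw [Set.indicator_of_mem hz]
    linarith
  · rw [Set.indicator_of_notMem hz, add_zero]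
    exact inv_le_one_of_one_le₀ (by simpa using hz)

theorem inv_norm_sub_mul_le {η : E → ℝ} {M : ℝ} (hM : ∀ y, |η y| ≤ M) (x y : E) :
    ‖x - y‖⁻¹ * |η y| ≤
      |η y| + M * (Metric.ball 0 1).indicator (fun z : E ↦ ‖z‖⁻¹) (x - y) := by
  set k := (Metric.ball 0 1).indicator fun z : E ↦ ‖z‖⁻¹
  have k_nonneg : 0 ≤ k (x - y) := Set.indicator_nonneg (fun z _ ↦ by positivity) _
  calc ‖x - y‖⁻¹ * |η y| ≤ (1 + k (x - y)) * |η y| := by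
        gcongr
        exact inv_norm_le_one_add_indicator (x - y)
    _ = |η y| + |η y| * k (x - y) := by ring
    _ ≤ |η y| + M * k (x - y) := by
      gcongr
      exact hM y

variable [MeasurableSpace E]

/-- The potential `x ↦ ∫ ‖x - y‖⁻¹ |η y| dμ(y)` of `|η|` for the kernel `‖x‖⁻¹` (in dimension `d`,
the Riesz potential of order `d - 1` up to normalization). -/
noncomputable def invNormPotential (μ : Measure E) (η : E → ℝ) (x : E) : ℝ :=
  ∫ y, ‖x - y‖⁻¹ * |η y| ∂μ

theorem InvNormLipschitzWith.integral_sub_mul {μ : Measure E} [NullSingletonClass μ] {C K : ℝ≥0}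
    {f η : E → ℝ} (hf : InvNormLipschitzWith C f)
    (hfη : ∀ x, Integrable (fun y ↦ f (x - y) * η y) μ)
    (hη : ∀ x, Integrable (fun y ↦ ‖x - y‖⁻¹ * |η y|) μ)
    (hK : ∀ x, ‖x‖ * invNormPotential μ η x ≤ K) :
    InvNormLipschitzWith (C * K) fun x ↦ ∫ y, f (x - y) * η y ∂μ := by
  have potential_le : ∀ x, x ≠ 0 → invNormPotential μ η x ≤ K * ‖x‖⁻¹ := fun x hx ↦ by
    rw [← div_eq_mul_inv, le_div_iff₀' (norm_pos_iff.2 hx)]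
    exact hK x
  intro a b ha hb
  have pointwise : ∀ᵐ y ∂μ, ‖f (a - y) * η y - f (b - y) * η y‖ ≤
      C * ‖a - b‖ * (‖a - y‖⁻¹ * |η y| + ‖b - y‖⁻¹ * |η y|) := by
    filter_upwards [Measure.ae_ne μ a, Measure.ae_ne μ b] with y hya hyb
    have hab := hf (a - y) (b - y) (sub_ne_zero.2 hya.symm) (sub_ne_zero.2 hyb.symm)
    rw [sub_sub_sub_cancel_right] at hab
    calc ‖f (a - y) * η y - f (b - y) * η y‖ = ‖f (a - y) - f (b - y)‖ * |η y| := by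
          rw [← sub_mul, norm_mul, Real.norm_eq_abs (η y)]
      _ ≤ C * ‖a - b‖ * (‖a - y‖⁻¹ + ‖b - y‖⁻¹) * |η y| := by gcongr
      _ = _ := by ring
  calc ‖(∫ y, f (a - y) * η y ∂μ) - ∫ y, f (b - y) * η y ∂μ‖
      = ‖∫ y, f (a - y) * η y - f (b - y) * η y ∂μ‖ := by rw [integral_sub (hfη a) (hfη b)]
    _ ≤ ∫ y, C * ‖a - b‖ * (‖a - y‖⁻¹ * |η y| + ‖b - y‖⁻¹ * |η y|) ∂μ :=
      norm_integral_le_of_norm_le (((hη a).add (hη b)).const_mul _) pointwise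
    _ = C * ‖a - b‖ * (invNormPotential μ η a + invNormPotential μ η b) := by
      rw [integral_const_mul, integral_add (hη a) (hη b), invNormPotential, invNormPotential]
    _ ≤ C * ‖a - b‖ * (K * ‖a‖⁻¹ + K * ‖b‖⁻¹) := by
      gcongr
      exacts [potential_le a ha, potential_le b hb]
    _ = (C * K : ℝ≥0) * ‖a - b‖ * (‖a‖⁻¹ + ‖b‖⁻¹) := by push_cast; ring

theorem norm_mul_invNormPotential_le {μ : Measure E} {η : E → ℝ} {R : ℝ} {x : E}
    (hη : Integrable η μ) (hpot : Integrable (fun y ↦ ‖x - y‖⁻¹ * |η y|) μ)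
    (hηR : ∀ y, η y ≠ 0 → ‖y‖ ≤ R) :
    ‖x‖ * invNormPotential μ η x ≤ ∫ y, |η y| ∂μ + R * invNormPotential μ η x := by
  have pointwise : ∀ y, ‖x‖ * (‖x - y‖⁻¹ * |η y|) ≤ |η y| + R * (‖x - y‖⁻¹ * |η y|) := by
    intro y
    by_cases hy : η y = 0
    · simp [hy]
    have norm_x_le : ‖x‖ ≤ ‖x - y‖ + R := by
      linarith [norm_sub_norm_le x y, hηR y hy]
    calc ‖x‖ * (‖x - y‖⁻¹ * |η y|) ≤ (‖x - y‖ + R) * (‖x - y‖⁻¹ * |η y|) := by gcongr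
      _ = ‖x - y‖ * ‖x - y‖⁻¹ * |η y| + R * (‖x - y‖⁻¹ * |η y|) := by ring
      _ ≤ 1 * |η y| + R * (‖x - y‖⁻¹ * |η y|) := by
        gcongr
        exact mul_inv_le_one
      _ = |η y| + R * (‖x - y‖⁻¹ * |η y|) := by rw [one_mul]
  calc ‖x‖ * invNormPotential μ η x = ∫ y, ‖x‖ * (‖x - y‖⁻¹ * |η y|) ∂μ :=
        (integral_const_mul _ _).symm
    _ ≤ ∫ y, |η y| + R * (‖x - y‖⁻¹ * |η y|) ∂μ :=
      integral_mono (hpot.const_mul _) (hη.abs.add (hpot.const_mul R)) pointwise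
    _ = ∫ y, |η y| ∂μ + R * invNormPotential μ η x := by
      rw [integral_add hη.abs (hpot.const_mul R), integral_const_mul, invNormPotential]

variable [NormedSpace ℝ E] [FiniteDimensional ℝ E] [BorelSpace E]
  {μ : Measure E} [μ.IsAddHaarMeasure] {η : E → ℝ} {M : ℝ}

theorem integrable_indicator_ball_inv_norm (hE : 1 < Module.finrank ℝ E) :
    Integrable ((Metric.ball 0 1).indicator fun z : E ↦ ‖z‖⁻¹) μ := by
  have hloc : LocallyIntegrable (fun z : E ↦ ‖z‖⁻¹) μ :=
    locallyIntegrable_of_norm_le_rpow (C := 1) (α := 1) hE.le (mod_cast hE)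
      (by simp [Real.rpow_neg_one]) (by fun_prop)
  rw [integrable_indicator_iff measurableSet_ball]
  exact (hloc.integrableOn_isCompact (isCompact_closedBall 0 1)).mono_set
    Metric.ball_subset_closedBall

theorem integrable_inv_norm_sub_mul (hE : 1 < Module.finrank ℝ E) (hη : Integrable η μ)
    (hM : ∀ y, |η y| ≤ M) (x : E) : Integrable (fun y ↦ ‖x - y‖⁻¹ * |η y|) μ := by
  refine (hη.abs.add (((integrable_indicator_ball_inv_norm hE).comp_sub_left x).const_mul M)).mono'
    (AEStronglyMeasurable.mul (by fun_prop) hη.abs.aestronglyMeasurable) ?_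
  filter_upwards with y
  rw [Real.norm_of_nonneg (by positivity)]
  exact inv_norm_sub_mul_le hM x y

theorem integrable_sub_mul_of_abs_le_inv_norm (hE : 1 < Module.finrank ℝ E) {f : E → ℝ} {B : ℝ}
    (hf : Measurable f) (hfB : ∀ x, |f x| ≤ B * ‖x‖⁻¹) (hη : Integrable η μ)
    (hM : ∀ y, |η y| ≤ M) (x : E) : Integrable (fun y ↦ f (x - y) * η y) μ := by
  refine ((integrable_inv_norm_sub_mul hE hη hM x).const_mul B).mono'
    (AEStronglyMeasurable.mul (Measurable.aestronglyMeasurable (by fun_prop))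
      hη.aestronglyMeasurable) ?_
  filter_upwards with y
  rw [norm_mul, Real.norm_eq_abs, Real.norm_eq_abs, ← mul_assoc]
  gcongr
  exact hfB (x - y)

theorem invNormPotential_le (hE : 1 < Module.finrank ℝ E) (hη : Integrable η μ)
    (hM : ∀ y, |η y| ≤ M) (x : E) :
    invNormPotential μ η x ≤ ∫ y, |η y| ∂μ + M * ∫ z in Metric.ball 0 1, ‖z‖⁻¹ ∂μ := by
  set k := (Metric.ball 0 1).indicator fun z : E ↦ ‖z‖⁻¹
  have hk : Integrable (fun y ↦ k (x - y)) μ :=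
    (integrable_indicator_ball_inv_norm hE).comp_sub_left x
  calc invNormPotential μ η x ≤ ∫ y, |η y| + M * k (x - y) ∂μ :=
        integral_mono (integrable_inv_norm_sub_mul hE hη hM x) (hη.abs.add (hk.const_mul M))
          (inv_norm_sub_mul_le hM x)
    _ = ∫ y, |η y| ∂μ + M * ∫ z in Metric.ball 0 1, ‖z‖⁻¹ ∂μ := by
      rw [integral_add hη.abs (hk.const_mul M), integral_const_mul,
        integral_sub_left_eq_self k μ x, integral_indicator measurableSet_ball]

theorem exists_norm_mul_invNormPotential_le (hE : 1 < Module.finrank ℝ E) (hη : Continuous η)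
    (hηsupp : HasCompactSupport η) :
    ∃ K : ℝ≥0, ∀ x, ‖x‖ * invNormPotential μ η x ≤ K := by
  obtain ⟨M, hM⟩ := hηsupp.exists_bound_of_continuous hη
  obtain ⟨R, hR, hηR⟩ := hηsupp.isCompact.isBounded.exists_pos_norm_le
  have hint := hη.integrable_of_hasCompactSupport (μ := μ) hηsupp
  let K := ∫ y, |η y| ∂μ + R * (∫ y, |η y| ∂μ + M * ∫ z in Metric.ball 0 1, ‖z‖⁻¹ ∂μ)
  refine ⟨K.toNNReal, fun x ↦ le_trans ?_ K.le_coe_toNNReal⟩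
  calc ‖x‖ * invNormPotential μ η x ≤ ∫ y, |η y| ∂μ + R * invNormPotential μ η x :=
        norm_mul_invNormPotential_le hint (integrable_inv_norm_sub_mul hE hint hM x)
          fun y hy ↦ hηR y (subset_tsupport η hy)
    _ ≤ K := by
      unfold K
      gcongr
      exact invNormPotential_le hE hint hM x

end Potential

section Green

open scoped NNReal

variable {χ ρ : EuclideanSpace ℝ (Fin 2) → ℝ} {δ : ℝ}

theorem Gfun_eq_log_norm_mul (χ : EuclideanSpace ℝ (Fin 2) → ℝ) :
    Gfun χ = fun x ↦ Real.log ‖x‖ * (-(2 * Real.pi)⁻¹ * χ x) := by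
  ext x
  rw [Gfun]
  ring

theorem exists_invNormLipschitzWith_Gfun (hχ : ContDiff ℝ 1 χ) (hχsupp : HasCompactSupport χ) :
    ∃ C, InvNormLipschitzWith C (Gfun χ) := by
  have hsupp : HasCompactSupport fun x ↦ -(2 * Real.pi)⁻¹ * χ x := hχsupp.mul_left
  obtain ⟨L, hL⟩ :=
    ContDiff.lipschitzWith_of_hasCompactSupport hsupp (contDiff_const.mul hχ) one_ne_zero
  rw [Gfun_eq_log_norm_mul]
  exact exists_invNormLipschitzWith_log_norm_mul hL hsupp

theorem exists_abs_Gfun_le (hχ : Continuous χ) (hχsupp : HasCompactSupport χ) :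
    ∃ B : ℝ, ∀ x, |Gfun χ x| ≤ B * ‖x‖⁻¹ := by
  rw [Gfun_eq_log_norm_mul]
  exact exists_abs_log_norm_mul_le (hχ.const_mul _) hχsupp.mul_left

theorem continuous_mollify (hρ : Continuous ρ) : Continuous (mollify ρ δ) := by
  unfold mollify
  fun_prop

theorem hasCompactSupport_mollify (hρ : HasCompactSupport ρ) (hδ : δ ≠ 0) :
    HasCompactSupport (mollify ρ δ) :=
  (hρ.comp_smul (inv_ne_zero hδ)).mul_left

theorem norm_mul_invNormPotential_mollify (hδ : 0 < δ) (x : EuclideanSpace ℝ (Fin 2)) :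
    ‖x‖ * invNormPotential volume (mollify ρ δ) x =
      ‖δ⁻¹ • x‖ * invNormPotential volume ρ (δ⁻¹ • x) := by
  have integrand_eq : ∀ y, ‖x - y‖⁻¹ * |mollify ρ δ y| =
      δ⁻¹ ^ 3 * (‖δ⁻¹ • x - δ⁻¹ • y‖⁻¹ * |ρ (δ⁻¹ • y)|) := by
    intro y
    rw [mollify, abs_mul, abs_of_pos (by positivity), ← smul_sub, norm_smul,
      Real.norm_of_nonneg (by positivity)]
    field_simp
  have potential_eq : invNormPotential volume (mollify ρ δ) x =
      δ⁻¹ * invNormPotential volume ρ (δ⁻¹ • x) := by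
    simp_rw [invNormPotential, integrand_eq]
    rw [integral_const_mul, Measure.integral_comp_inv_smul_of_nonneg volume
      (fun y ↦ ‖δ⁻¹ • x - y‖⁻¹ * |ρ y|) hδ.le, finrank_euclideanSpace_fin, smul_eq_mul]
    field_simp
  rw [potential_eq, norm_smul, Real.norm_of_nonneg (by positivity)]
  ring

theorem exists_invNormLipschitzWith_Gmol (hχ : ContDiff ℝ 1 χ) (hχsupp : HasCompactSupport χ)
    (hρ : Continuous ρ) (hρsupp : HasCompactSupport ρ) :
    ∃ C, ∀ δ > 0, InvNormLipschitzWith C (Gmol χ ρ δ) := by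
  have hdim : 1 < Module.finrank ℝ (EuclideanSpace ℝ (Fin 2)) := by simp
  obtain ⟨C, hC⟩ := exists_invNormLipschitzWith_Gfun hχ hχsupp
  obtain ⟨B, hB⟩ := exists_abs_Gfun_le hχ.continuous hχsupp
  obtain ⟨K, hK⟩ := exists_norm_mul_invNormPotential_le (μ := volume) hdim hρ hρsupp
  have hGmeas : Measurable (Gfun χ) := by
    have := hχ.continuous.measurable
    unfold Gfun
    fun_prop
  refine ⟨C * K, fun δ hδ ↦ ?_⟩
  have hcont := continuous_mollify (δ := δ) hρ
  have hsupp := hasCompactSupport_mollify hρsupp hδ.ne'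
  have hint := hcont.integrable_of_hasCompactSupport (μ := volume) hsupp
  obtain ⟨M, hM⟩ := hsupp.exists_bound_of_continuous hcont
  refine hC.integral_sub_mul (integrable_sub_mul_of_abs_le_inv_norm hdim hGmeas hB hint hM)
    (integrable_inv_norm_sub_mul hdim hint hM) fun x ↦ ?_
  rw [norm_mul_invNormPotential_mollify hδ]
  exact hK (δ⁻¹ • x)

theorem gradient_bound_green_function_general (hχ : ContDiff ℝ 1 χ) (hχsupp : HasCompactSupport χ)
    (hρ : Continuous ρ) (hρsupp : HasCompactSupport ρ) :
    ∃ C > (0 : ℝ), ∀ x : EuclideanSpace ℝ (Fin 2), x ≠ 0 → ∀ δ > 0,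
      ‖gradient (Gfun χ) x‖ ≤ C / ‖x‖ ∧ ‖gradient (Gmol χ ρ δ) x‖ ≤ C / ‖x‖ := by
  obtain ⟨C₁, hG⟩ := exists_invNormLipschitzWith_Gfun hχ hχsupp
  obtain ⟨C₂, hGδ⟩ := exists_invNormLipschitzWith_Gmol hχ hχsupp hρ hρsupp
  refine ⟨2 * C₁ + 2 * C₂ + 1, by positivity, fun x hx δ hδ ↦ ⟨?_, ?_⟩⟩
  · exact (hG.norm_gradient_le hx).trans (by gcongr; linarith [C₁.coe_nonneg, C₂.coe_nonneg])
  · exact ((hGδ δ hδ).norm_gradient_le hx).trans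
      (by gcongr; linarith [C₁.coe_nonneg, C₂.coe_nonneg])

end Green

theorem gradient_bound_green_function
    (χ : EuclideanSpace ℝ (Fin 2) → ℝ)
    (hχsmooth : ContDiff ℝ (⊤ : ℕ∞) χ)
    (hχrange : ∀ x, χ x ∈ Set.Icc (0:ℝ) 1)
    (hχradial : ∀ x y, ‖x‖ = ‖y‖ → χ x = χ y)
    (hχone : ∀ x, ‖x‖ ≤ 1 → χ x = 1)
    (hχzero : ∀ x, 2 ≤ ‖x‖ → χ x = 0)
    (ρ : EuclideanSpace ℝ (Fin 2) → ℝ)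
    (hρsmooth : ContDiff ℝ (⊤ : ℕ∞) ρ)
    (hρeven : ∀ x, ρ (-x) = ρ x)
    (hρsupp : Function.support ρ ⊆ Metric.closedBall 0 1)
    (hρint : ∫ x, ρ x = 1) :
    ∃ C > (0:ℝ), ∀ x : EuclideanSpace ℝ (Fin 2), x ≠ 0 → ∀ δ ∈ Set.Ioc (0:ℝ) 1,
      ‖gradient (Gfun χ) x‖ ≤ C / ‖x‖ ∧ ‖gradient (Gmol χ ρ δ) x‖ ≤ C / ‖x‖ := by
  have hχsupp : HasCompactSupport χ :=
    .intro (isCompact_closedBall 0 2) fun x hx ↦ hχzero x (by simpa using hx : 2 < ‖x‖).le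
  obtain ⟨C, hC, hbound⟩ := gradient_bound_green_function_general
    (hχsmooth.of_le (by simp)) hχsupp hρsmooth.continuous
    (.of_support_subset_isCompact (isCompact_closedBall 0 1) hρsupp)
  exact ⟨C, hC, fun x hx δ hδ ↦ hbound x hx δ hδ.1⟩
end

section
/- There exists a constant C > 0 such that for every x ∈ ℝ² with x ≠ 0, every δ ∈ (0,1] and every κ' ∈ (0,1): |∇(G - G_δ)(x)| ≤ C δ^{κ'} |x|^{-1-κ'}. -/
open MeasureTheory

/-! Having a logarithmic singularity at the origin is invariant under dilations, so the
mollification scale can be rescaled to `δ = 1` while the constants stay the same for all `δ`. At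
unit scale, and far from the origin, `f - ρ ⋆ f` is the `ρ`-average of `f - f (· - t)`, whose
gradient is `O(‖x‖⁻²)` by the regularity of `∇f`. Near the origin `∇f` is `O(‖x‖⁻¹)`, while `ρ ⋆ f`
is globally Lipschitz because `|log ‖u‖ - log ‖v‖| ≤ ‖u - v‖ (‖u‖⁻¹ + ‖v‖⁻¹)` and `‖·‖⁻¹` is locally
integrable in dimension at least two. Since the gradient is `O(‖x‖⁻¹)` for `‖x‖ ≲ 1` and `O(‖x‖⁻²)`
for `‖x‖ ≳ 1`, it is `O(‖x‖⁻¹⁻ᵏ)` for every exponent `k ∈ [0, 1]`, and scaling back produces `δᵏ`.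
-/

open Metric Module
open ContinuousLinearMap (lsmul)
open scoped Convolution

section Norm

variable {E : Type*} [NormedAddCommGroup E]

theorem norm_le_two_mul_norm_sub {x y : E} (hxy : 2 * ‖y‖ ≤ ‖x‖) : ‖x‖ ≤ 2 * ‖x - y‖ := by
  linarith [norm_sub_norm_le x y]

theorem sub_ne_zero_of_two_mul_norm_le {x y : E} (hx : x ≠ 0) (hxy : 2 * ‖y‖ ≤ ‖x‖) :
    x - y ≠ 0 := by
  have hx' : 0 < ‖x‖ := norm_pos_iff.2 hx
  exact norm_pos_iff.1 (by linarith [norm_le_two_mul_norm_sub hxy])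

theorem inv_norm_sub_le {x y : E} (hx : x ≠ 0) (hxy : 2 * ‖y‖ ≤ ‖x‖) : ‖x - y‖⁻¹ ≤ 2 * ‖x‖⁻¹ := by
  rw [inv_le_comm₀ (norm_pos_iff.2 (sub_ne_zero_of_two_mul_norm_le hx hxy)) (by positivity),
    mul_inv, inv_inv]
  linarith [norm_le_two_mul_norm_sub hxy]

end Norm

section LogSingularity

variable {E F : Type*} [NormedAddCommGroup E] [NormedSpace ℝ E]
  [NormedAddCommGroup F] [NormedSpace ℝ F]

/-- `f` has at most a logarithmic singularity at the origin, with constant `A`: its derivative obeys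
the size and regularity bounds of a singular kernel of order `-1`. The size bound is stated on
differences of `f` rather than on `fderiv ℝ f` because it has to apply to pairs of points whose
joining segment may pass through the origin. -/
structure HasLogSingularity (f : E → F) (A : ℝ) : Prop where
  differentiableAt : ∀ x ≠ 0, DifferentiableAt ℝ f x
  norm_image_sub_le : ∀ x y, x ≠ 0 → y ≠ 0 → ‖f x - f y‖ ≤ A * ‖x - y‖ * (‖x‖⁻¹ + ‖y‖⁻¹)
  norm_fderiv_sub_le : ∀ x y, x ≠ 0 → 2 * ‖y‖ ≤ ‖x‖ →
    ‖fderiv ℝ f (x - y) - fderiv ℝ f x‖ ≤ A * ‖y‖ / ‖x‖ ^ 2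

namespace HasLogSingularity

variable {f : E → F} {A : ℝ}

theorem nonneg [Nontrivial E] (hf : HasLogSingularity f A) : 0 ≤ A := by
  obtain ⟨x, hx⟩ := exists_ne (0 : E)
  have h := (norm_nonneg _).trans (hf.norm_image_sub_le x (-x) hx (neg_ne_zero.2 hx))
  have hpos : 0 < ‖x - -x‖ * (‖x‖⁻¹ + ‖-x‖⁻¹) := by
    rw [sub_neg_eq_add, ← two_smul ℝ x, norm_smul, norm_neg, Real.norm_ofNat]
    positivity
  rw [mul_assoc] at h
  exact nonneg_of_mul_nonneg_left h hpos

theorem norm_fderiv_le [Nontrivial E] (hf : HasLogSingularity f A) {x : E} (hx : x ≠ 0) :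
    ‖fderiv ℝ f x‖ ≤ 3 * A / ‖x‖ := by
  have hA := hf.nonneg
  have hx' : 0 < ‖x‖ := norm_pos_iff.2 hx
  refine norm_fderiv_le_of_lip' ℝ (by positivity) ?_
  filter_upwards [continuous_norm.continuousAt.eventually (lt_mem_nhds (half_lt_self hx'))]
    with w hw
  have hinv : ‖w‖⁻¹ ≤ 2 * ‖x‖⁻¹ := by
    simpa [div_eq_mul_inv] using inv_anti₀ (half_pos hx') hw.le
  calc ‖f w - f x‖ ≤ A * ‖w - x‖ * (‖w‖⁻¹ + ‖x‖⁻¹) :=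
        hf.norm_image_sub_le w x (norm_pos_iff.1 ((half_pos hx').trans hw)) hx
    _ ≤ A * ‖w - x‖ * (2 * ‖x‖⁻¹ + ‖x‖⁻¹) := by gcongr
    _ = 3 * A / ‖x‖ * ‖w - x‖ := by ring

theorem exists_norm_le_div [Nontrivial E] (hf : HasLogSingularity f A) {R : ℝ} (hR : 0 ≤ R) :
    ∃ B, 0 ≤ B ∧ ∀ x ≠ 0, ‖x‖ ≤ R → ‖f x‖ ≤ B / ‖x‖ := by
  have hA := hf.nonneg
  obtain ⟨e, he⟩ := exists_norm_eq E zero_le_one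
  refine ⟨‖f e‖ * R + A * (R + 1) ^ 2, by positivity, fun x hx hxR => ?_⟩
  have hdist : ‖x - e‖ ≤ ‖x‖ + 1 := he ▸ norm_sub_le x e
  have he0 : e ≠ 0 := norm_pos_iff.1 (by linarith)
  calc ‖f x‖ ≤ ‖f e‖ + ‖f x - f e‖ := norm_le_norm_add_norm_sub' _ _
    _ ≤ ‖f e‖ + A * (‖x‖ + 1) * (‖x‖⁻¹ + 1) := by
        have h := hf.norm_image_sub_le x e hx he0
        rw [he, inv_one] at h
        exact add_le_add_right (h.trans (by gcongr)) _
    _ = (‖f e‖ * ‖x‖ + A * (‖x‖ + 1) ^ 2) / ‖x‖ := by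
        field_simp
        ring
    _ ≤ (‖f e‖ * R + A * (R + 1) ^ 2) / ‖x‖ := by gcongr

theorem norm_sub_comp_sub_sub_le (hf : HasLogSingularity f A) {x w t : E} (hx : x ≠ 0)
    (ht : 4 * ‖t‖ ≤ ‖x‖) (hw : w ∈ ball x (‖x‖ / 2)) :
    ‖(f w - f (w - t)) - (f x - f (x - t))‖ ≤ 4 * A * ‖t‖ / ‖x‖ ^ 2 * ‖w - x‖ := by
  have : Nontrivial E := ⟨x, 0, hx⟩
  have hA := hf.nonneg
  have hx' : 0 < ‖x‖ := norm_pos_iff.2 hx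
  have norm_lt {v : E} (hv : v ∈ ball x (‖x‖ / 2)) : ‖x‖ / 2 < ‖v‖ := by
    have := norm_sub_norm_le x v
    rw [mem_ball_iff_norm'] at hv
    linarith
  have ne_zero {v : E} (hv : v ∈ ball x (‖x‖ / 2)) : v ≠ 0 :=
    norm_pos_iff.1 ((half_pos hx').trans (norm_lt hv))
  have two_mul_le {v : E} (hv : v ∈ ball x (‖x‖ / 2)) : 2 * ‖t‖ ≤ ‖v‖ := by
    linarith [norm_lt hv]
  have hshift {v : E} (hv : v ∈ ball x (‖x‖ / 2)) : DifferentiableAt ℝ (fun v => f (v - t)) v :=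
    (differentiableAt_comp_sub t).2
      (hf.differentiableAt _ (sub_ne_zero_of_two_mul_norm_le (ne_zero hv) (two_mul_le hv)))
  refine (convex_ball x (‖x‖ / 2)).norm_image_sub_le_of_norm_fderiv_le (𝕜 := ℝ)
    (f := fun v => f v - f (v - t))
    (fun v hv => (hf.differentiableAt v (ne_zero hv)).sub (hshift hv)) (fun v hv => ?_)
    (mem_ball_self (half_pos hx')) hw
  rw [fderiv_fun_sub (hf.differentiableAt v (ne_zero hv)) (hshift hv), fderiv_comp_sub,
    norm_sub_rev]
  calc ‖fderiv ℝ f (v - t) - fderiv ℝ f v‖ ≤ A * ‖t‖ / ‖v‖ ^ 2 :=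
        hf.norm_fderiv_sub_le v t (ne_zero hv) (two_mul_le hv)
    _ ≤ A * ‖t‖ / (‖x‖ / 2) ^ 2 := by
        gcongr
        exact (norm_lt hv).le
    _ = 4 * A * ‖t‖ / ‖x‖ ^ 2 := by ring

theorem comp_smul (hf : HasLogSingularity f A) {c : ℝ} (hc : c ≠ 0) :
    HasLogSingularity (fun x => f (c • x)) A where
  differentiableAt x hx :=
    (hf.differentiableAt (c • x) (smul_ne_zero hc hx)).comp x (differentiableAt_id.const_smul c)
  norm_image_sub_le x y hx hy := by
    have hc' : ‖c‖ ≠ 0 := norm_ne_zero_iff.2 hc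
    refine (hf.norm_image_sub_le _ _ (smul_ne_zero hc hx) (smul_ne_zero hc hy)).trans_eq ?_
    rw [← smul_sub, norm_smul, norm_smul, norm_smul]
    field_simp
  norm_fderiv_sub_le x y hx hxy := by
    have hc' : 0 < ‖c‖ := norm_pos_iff.2 hc
    have hx' : ‖x‖ ≠ 0 := norm_ne_zero_iff.2 hx
    have hcxy : 2 * ‖c • y‖ ≤ ‖c • x‖ := by
      rw [norm_smul, norm_smul]
      nlinarith
    have h := hf.norm_fderiv_sub_le (c • x) (c • y) (smul_ne_zero hc hx) hcxy
    rw [fderiv_comp_smul, fderiv_comp_smul, ← smul_sub, norm_smul, smul_sub]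
    calc ‖c‖ * ‖fderiv ℝ f (c • x - c • y) - fderiv ℝ f (c • x)‖
        ≤ ‖c‖ * (A * ‖c • y‖ / ‖c • x‖ ^ 2) := by gcongr
      _ = A * ‖y‖ / ‖x‖ ^ 2 := by
          rw [norm_smul, norm_smul]
          field_simp

end HasLogSingularity

end LogSingularity

section LogNorm

variable {E : Type*} [NormedAddCommGroup E] [InnerProductSpace ℝ E]

theorem abs_log_sub_log_le {a b : ℝ} (ha : 0 < a) (hb : 0 < b) :
    |Real.log a - Real.log b| ≤ |a - b| * (a⁻¹ + b⁻¹) := by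
  have log_sub_log_le {s t : ℝ} (hs : 0 < s) (ht : 0 < t) :
      Real.log s - Real.log t ≤ |s - t| * t⁻¹ :=
    calc Real.log s - Real.log t = Real.log (s / t) := (Real.log_div hs.ne' ht.ne').symm
      _ ≤ s / t - 1 := Real.log_le_sub_one_of_pos (div_pos hs ht)
      _ = (s - t) * t⁻¹ := by field_simp
      _ ≤ |s - t| * t⁻¹ := by gcongr; exact le_abs_self _
  have hab := log_sub_log_le ha hb
  have hba := log_sub_log_le hb ha
  rw [abs_sub_comm] at hba
  have : 0 ≤ |a - b| * a⁻¹ := by positivity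
  have : 0 ≤ |a - b| * b⁻¹ := by positivity
  rw [abs_sub_le_iff]
  constructor <;> linarith

theorem hasFDerivAt_log_norm {x : E} (hx : x ≠ 0) :
    HasFDerivAt (fun y : E => Real.log ‖y‖) (innerSL ℝ ((1 / ‖x‖) ^ 2 • x)) x := by
  have hlog : (fun y : E => Real.log ‖y‖) = fun y => 1 / 2 * Real.log (‖y‖ ^ 2) := by
    ext y
    simp
  have hderiv : innerSL ℝ ((1 / ‖x‖) ^ 2 • x)
      = (1 / 2 : ℝ) • (‖x‖ ^ 2)⁻¹ • (2 • innerSL ℝ x) := by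
    ext v
    simp only [one_div, inv_pow, map_smul, smul_apply, smul_eq_mul, nsmul_eq_mul]
    push_cast
    ring
  rw [hlog, hderiv]
  exact ((hasStrictFDerivAt_norm_sq x).hasFDerivAt.log
    (pow_ne_zero 2 (norm_ne_zero_iff.2 hx))).const_mul _

theorem norm_fderiv_log_norm_sub {x y : E} (hx : x ≠ 0) (hy : y ≠ 0) :
    ‖fderiv ℝ (fun z : E => Real.log ‖z‖) x - fderiv ℝ (fun z : E => Real.log ‖z‖) y‖
      = ‖x - y‖ / (‖x‖ * ‖y‖) := by
  rw [(hasFDerivAt_log_norm hx).fderiv, (hasFDerivAt_log_norm hy).fderiv, ← map_sub,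
    innerSL_apply_norm, ← dist_eq_norm, dist_div_norm_sq_smul hx hy, dist_eq_norm]
  ring

theorem hasLogSingularity_log_norm : HasLogSingularity (fun x : E => Real.log ‖x‖) 2 where
  differentiableAt x hx := (hasFDerivAt_log_norm hx).differentiableAt
  norm_image_sub_le x y hx hy := by
    refine (abs_log_sub_log_le (norm_pos_iff.2 hx) (norm_pos_iff.2 hy)).trans ?_
    gcongr
    linarith [abs_norm_sub_norm_le x y, norm_nonneg (x - y)]
  norm_fderiv_sub_le x y hx hxy := by
    rw [norm_fderiv_log_norm_sub (sub_ne_zero_of_two_mul_norm_le hx hxy) hx, sub_sub_cancel_left,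
      norm_neg]
    calc ‖y‖ / (‖x - y‖ * ‖x‖) = ‖y‖ * ‖x - y‖⁻¹ * ‖x‖⁻¹ := by
          rw [div_eq_mul_inv, mul_inv, mul_assoc]
      _ ≤ ‖y‖ * (2 * ‖x‖⁻¹) * ‖x‖⁻¹ := by gcongr; exact inv_norm_sub_le hx hxy
      _ = 2 * ‖y‖ / ‖x‖ ^ 2 := by ring

end LogNorm

section Cutoff

variable {E F : Type*} [NormedAddCommGroup E] [NormedSpace ℝ E]
  [NormedAddCommGroup F] [NormedSpace ℝ F]

theorem exists_norm_le_and_norm_sub_le_of_hasCompactSupport {g : E → F} (hc : HasCompactSupport g)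
    (hg : ContDiff ℝ 1 g) :
    ∃ M, (∀ x, ‖g x‖ ≤ M) ∧ ∀ x y, ‖g x - g y‖ ≤ M * ‖x - y‖ := by
  obtain ⟨M, hM⟩ := hc.exists_bound_of_continuous hg.continuous
  obtain ⟨L, hL⟩ := hg.lipschitzWith_of_hasCompactSupport hc one_ne_zero
  refine ⟨max M L, fun x => (hM x).trans (le_max_left _ _), fun x y => ?_⟩
  exact (hL.norm_sub_le x y).trans (by gcongr; exact le_max_right _ _)

/-- `φ` is a `C^{1,1}` cutoff function supported in the closed ball of radius `R`, with a single
constant `M` bounding `φ`, its derivative and the Lipschitz constants of both. -/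
structure IsCutoff (φ : E → ℝ) (R M : ℝ) : Prop where
  differentiable : Differentiable ℝ φ
  tsupport_subset : tsupport φ ⊆ closedBall 0 R
  norm_le : ∀ x, ‖φ x‖ ≤ M
  norm_image_sub_le : ∀ x y, ‖φ x - φ y‖ ≤ M * ‖x - y‖
  norm_fderiv_le : ∀ x, ‖fderiv ℝ φ x‖ ≤ M
  norm_fderiv_sub_le : ∀ x y, ‖fderiv ℝ φ x - fderiv ℝ φ y‖ ≤ M * ‖x - y‖

theorem exists_isCutoff {φ : E → ℝ} (hc : HasCompactSupport φ) (hφ : ContDiff ℝ 2 φ) :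
    ∃ R M, 0 ≤ R ∧ IsCutoff φ R M := by
  obtain ⟨R, hR, hsub⟩ := hc.isCompact.isBounded.subset_closedBall_lt 0 0
  obtain ⟨M, hM, hML⟩ :=
    exists_norm_le_and_norm_sub_le_of_hasCompactSupport hc (hφ.of_le one_le_two)
  obtain ⟨N, hN, hNL⟩ := exists_norm_le_and_norm_sub_le_of_hasCompactSupport (hc.fderiv ℝ)
    (hφ.fderiv_right (m := 1) one_add_one_eq_two.le)
  have hMN : M ≤ max M N := le_max_left M N
  have hNM : N ≤ max M N := le_max_right M N
  exact ⟨R, max M N, hR.le,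
    { differentiable := hφ.differentiable two_ne_zero
      tsupport_subset := hsub
      norm_le := fun x => (hM x).trans hMN
      norm_image_sub_le := fun x y => (hML x y).trans (by gcongr)
      norm_fderiv_le := fun x => (hN x).trans hNM
      norm_fderiv_sub_le := fun x y => (hNL x y).trans (by gcongr) }⟩

namespace IsCutoff

variable {φ : E → ℝ} {R M : ℝ}

theorem nonneg (hφ : IsCutoff φ R M) : 0 ≤ M := (norm_nonneg _).trans (hφ.norm_le 0)

theorem notMem_tsupport (hφ : IsCutoff φ R M) {x : E} (hx : R < ‖x‖) : x ∉ tsupport φ :=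
  fun hmem => hx.not_ge (by simpa using hφ.tsupport_subset hmem)

theorem eq_zero (hφ : IsCutoff φ R M) {x : E} (hx : R < ‖x‖) : φ x = 0 :=
  image_eq_zero_of_notMem_tsupport (hφ.notMem_tsupport hx)

theorem fderiv_eq_zero (hφ : IsCutoff φ R M) {x : E} (hx : R < ‖x‖) : fderiv ℝ φ x = 0 :=
  fderiv_of_notMem_tsupport ℝ (hφ.notMem_tsupport hx)

end IsCutoff

namespace HasLogSingularity

variable {f : E → F} {φ : E → ℝ} {A B R M : ℝ}

theorem norm_smul_sub_smul_le [Nontrivial E] (hf : HasLogSingularity f A) (hφ : IsCutoff φ R M)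
    (hB : ∀ x ≠ 0, ‖x‖ ≤ R → ‖f x‖ ≤ B / ‖x‖) (hB0 : 0 ≤ B) {x y : E} (hx : x ≠ 0) (hy : y ≠ 0) :
    ‖φ x • f x - φ y • f y‖ ≤ M * (A + B) * ‖x - y‖ * (‖x‖⁻¹ + ‖y‖⁻¹) := by
  have hA := hf.nonneg
  have hM := hφ.nonneg
  wlog hyR : ‖y‖ ≤ R generalizing x y
  · obtain hxR | hxR := le_or_gt ‖x‖ R
    · rw [norm_sub_rev, norm_sub_rev x, add_comm ‖x‖⁻¹]
      exact this hy hx hxR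
    · rw [hφ.eq_zero hxR, hφ.eq_zero (not_le.1 hyR), zero_smul, zero_smul, sub_zero, norm_zero]
      positivity
  have hsplit : φ x • f x - φ y • f y = φ x • (f x - f y) + (φ x - φ y) • f y := by module
  calc ‖φ x • f x - φ y • f y‖ ≤ ‖φ x‖ * ‖f x - f y‖ + ‖φ x - φ y‖ * ‖f y‖ := by
        rw [hsplit, ← norm_smul, ← norm_smul]
        exact norm_add_le _ _
    _ ≤ M * (A * ‖x - y‖ * (‖x‖⁻¹ + ‖y‖⁻¹)) + M * ‖x - y‖ * (B * (‖x‖⁻¹ + ‖y‖⁻¹)) := by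
        gcongr
        · exact hφ.norm_le x
        · exact hf.norm_image_sub_le x y hx hy
        · exact hφ.norm_image_sub_le x y
        · refine (hB y hy hyR).trans ?_
          rw [div_eq_mul_inv]
          gcongr
          exact le_add_of_nonneg_left (by positivity)
    _ = M * (A + B) * ‖x - y‖ * (‖x‖⁻¹ + ‖y‖⁻¹) := by ring

theorem fderiv_smul (hf : HasLogSingularity f A) (hφ : IsCutoff φ R M) {x : E} (hx : x ≠ 0) :
    fderiv ℝ (fun z => φ z • f z) x = φ x • fderiv ℝ f x + (fderiv ℝ φ x).smulRight (f x) :=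
  fderiv_fun_smul (hφ.differentiable x) (hf.differentiableAt x hx)

theorem norm_fderiv_smul_sub_le_add [Nontrivial E] (hf : HasLogSingularity f A)
    (hφ : IsCutoff φ R M) {x y : E} (hx : x ≠ 0) (hB : ‖f x‖ ≤ B / ‖x‖) (hxy : 2 * ‖y‖ ≤ ‖x‖) :
    ‖fderiv ℝ (fun z => φ z • f z) (x - y) - fderiv ℝ (fun z => φ z • f z) x‖
      ≤ M * A * ‖y‖ / ‖x‖ ^ 2 + M * (6 * A + B) * ‖y‖ / ‖x‖ := by
  have hA := hf.nonneg
  have hM := hφ.nonneg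
  have hz := sub_ne_zero_of_two_mul_norm_le hx hxy
  have hinv := inv_norm_sub_le hx hxy
  have hzx : ‖x - y - x‖ = ‖y‖ := by rw [sub_sub_cancel_left, norm_neg]
  have hfderiv := hf.norm_fderiv_sub_le x y hx hxy
  rw [hf.fderiv_smul hφ hz, hf.fderiv_smul hφ hx]
  generalize x - y = z at *
  have hsplit : φ z • fderiv ℝ f z + (fderiv ℝ φ z).smulRight (f z)
        - (φ x • fderiv ℝ f x + (fderiv ℝ φ x).smulRight (f x))
      = φ z • (fderiv ℝ f z - fderiv ℝ f x) + (φ z - φ x) • fderiv ℝ f x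
        + (fderiv ℝ φ z).smulRight (f z - f x) + (fderiv ℝ φ z - fderiv ℝ φ x).smulRight (f x) := by
    ext v
    simp only [sub_apply, add_apply, smul_apply, ContinuousLinearMap.smulRight_apply]
    module
  have hDf := hf.norm_fderiv_le hx
  have himage := hf.norm_image_sub_le z x hz hx
  have hφz := hφ.norm_image_sub_le z x
  have hDφz := hφ.norm_fderiv_sub_le z x
  rw [hzx] at himage hφz hDφz
  rw [hsplit]
  refine norm_add₄_le.trans ?_
  simp only [norm_smul, ContinuousLinearMap.norm_smulRight_apply]
  calc ‖φ z‖ * ‖fderiv ℝ f z - fderiv ℝ f x‖ + ‖φ z - φ x‖ * ‖fderiv ℝ f x‖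
        + ‖fderiv ℝ φ z‖ * ‖f z - f x‖ + ‖fderiv ℝ φ z - fderiv ℝ φ x‖ * ‖f x‖
      ≤ M * (A * ‖y‖ / ‖x‖ ^ 2) + M * ‖y‖ * (3 * A / ‖x‖)
        + M * (A * ‖y‖ * (2 * ‖x‖⁻¹ + ‖x‖⁻¹)) + M * ‖y‖ * (B / ‖x‖) := by
        gcongr
        · exact hφ.norm_le z
        · exact hφ.norm_fderiv_le z
        · exact himage.trans (by gcongr)
    _ = M * A * ‖y‖ / ‖x‖ ^ 2 + M * (6 * A + B) * ‖y‖ / ‖x‖ := by ring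

theorem norm_fderiv_smul_sub_le [Nontrivial E] (hf : HasLogSingularity f A) (hφ : IsCutoff φ R M)
    (hB : ∀ x ≠ 0, ‖x‖ ≤ 2 * R → ‖f x‖ ≤ B / ‖x‖) (hB0 : 0 ≤ B) (hR : 0 ≤ R) {x y : E}
    (hx : x ≠ 0) (hxy : 2 * ‖y‖ ≤ ‖x‖) :
    ‖fderiv ℝ (fun z => φ z • f z) (x - y) - fderiv ℝ (fun z => φ z • f z) x‖
      ≤ M * (A + 2 * R * (6 * A + B)) * ‖y‖ / ‖x‖ ^ 2 := by
  have hA := hf.nonneg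
  have hM := hφ.nonneg
  have hx' : 0 < ‖x‖ := norm_pos_iff.2 hx
  obtain hxR | hxR := le_or_gt ‖x‖ (2 * R)
  · have hinv : 1 / ‖x‖ ≤ 2 * R / ‖x‖ ^ 2 := by
      rw [div_le_div_iff₀ hx' (by positivity)]
      nlinarith
    calc _ ≤ M * A * ‖y‖ / ‖x‖ ^ 2 + M * (6 * A + B) * ‖y‖ / ‖x‖ :=
          hf.norm_fderiv_smul_sub_le_add hφ hx (hB x hx hxR) hxy
      _ = M * A * ‖y‖ / ‖x‖ ^ 2 + M * (6 * A + B) * ‖y‖ * (1 / ‖x‖) := by ring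
      _ ≤ M * A * ‖y‖ / ‖x‖ ^ 2 + M * (6 * A + B) * ‖y‖ * (2 * R / ‖x‖ ^ 2) := by gcongr
      _ = M * (A + 2 * R * (6 * A + B)) * ‖y‖ / ‖x‖ ^ 2 := by ring
  · have fderiv_eq_zero {z : E} (hz : z ≠ 0) (hzR : R < ‖z‖) :
        fderiv ℝ (fun z => φ z • f z) z = 0 := by
      rw [hf.fderiv_smul hφ hz, hφ.eq_zero hzR, hφ.fderiv_eq_zero hzR, zero_smul,
        ContinuousLinearMap.zero_smulRight, add_zero]
    rw [fderiv_eq_zero hx (by linarith), fderiv_eq_zero (sub_ne_zero_of_two_mul_norm_le hx hxy)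
      (by linarith [norm_le_two_mul_norm_sub hxy]), sub_zero, norm_zero]
    positivity

theorem exists_cutoff_smul [Nontrivial E] (hf : HasLogSingularity f A) (hc : HasCompactSupport φ)
    (hφ : ContDiff ℝ 2 φ) : ∃ A', HasLogSingularity (fun x => φ x • f x) A' := by
  obtain ⟨R, M, hR, hφ⟩ := exists_isCutoff hc hφ
  obtain ⟨B, hB0, hB⟩ := hf.exists_norm_le_div (mul_nonneg zero_le_two hR)
  have hBR : ∀ x ≠ 0, ‖x‖ ≤ R → ‖f x‖ ≤ B / ‖x‖ := fun x hx hxR => hB x hx (by linarith)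
  exact ⟨max (M * (A + B)) (M * (A + 2 * R * (6 * A + B))),
    { differentiableAt := fun x hx => (hφ.differentiable x).smul (hf.differentiableAt x hx)
      norm_image_sub_le := fun x y hx hy =>
        (hf.norm_smul_sub_smul_le hφ hBR hB0 hx hy).trans (by gcongr; exact le_max_left _ _)
      norm_fderiv_sub_le := fun x y hx hxy =>
        (hf.norm_fderiv_smul_sub_le hφ hB hB0 hR hx hxy).trans
          (by gcongr; exact le_max_right _ _) }⟩

end HasLogSingularity

end Cutoff

section Mollification

variable {E F : Type*} [NormedAddCommGroup E] [NormedSpace ℝ E] [FiniteDimensional ℝ E]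
  [MeasurableSpace E] [BorelSpace E] {μ : Measure E} [μ.IsAddHaarMeasure]
  [NormedAddCommGroup F] [NormedSpace ℝ F]

theorem integrableOn_inv_norm_ball (hE : 2 ≤ finrank ℝ E) (r : ℝ) :
    IntegrableOn (fun x : E => ‖x‖⁻¹) (ball 0 r) μ := by
  refine integrableOn_ball_of_norm_le_rpow (C := 1) (α := 1) (by omega) (by exact_mod_cast hE) ?_
    (by fun_prop)
  filter_upwards with x
  rw [norm_inv, norm_norm, Real.rpow_neg_one, one_mul]

theorem exists_integral_norm_mul_inv_norm_sub_le (hE : 2 ≤ finrank ℝ E) {g : E → ℝ}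
    (hg : Integrable g μ) {M : ℝ} (hM : ∀ t, ‖g t‖ ≤ M) :
    ∃ K, ∀ w, Integrable (fun t => ‖g t‖ * ‖w - t‖⁻¹) μ ∧ ∫ t, ‖g t‖ * ‖w - t‖⁻¹ ∂μ ≤ K := by
  set q : E → ℝ := (ball 0 1).indicator fun x => ‖x‖⁻¹
  have hq : Integrable q μ :=
    (integrableOn_inv_norm_ball hE 1).integrable_indicator measurableSet_ball
  have hbound (w t : E) : ‖g t‖ * ‖w - t‖⁻¹ ≤ M * q (w - t) + ‖g t‖ := by
    by_cases hwt : w - t ∈ ball 0 1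
    · simp only [q, Set.indicator_of_mem hwt]
      have := mul_le_mul_of_nonneg_right (hM t) (inv_nonneg.2 (norm_nonneg (w - t)))
      linarith [norm_nonneg (g t)]
    · simp only [q, Set.indicator_of_notMem hwt, mul_zero, zero_add]
      refine mul_le_of_le_one_right (norm_nonneg _) (inv_le_one_of_one_le₀ ?_)
      simpa using hwt
  have hdom (w : E) : Integrable (fun t => M * q (w - t) + ‖g t‖) μ :=
    ((hq.comp_sub_left w).const_mul M).add hg.norm
  have hint (w : E) : Integrable (fun t => ‖g t‖ * ‖w - t‖⁻¹) μ := by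
    refine (hdom w).mono' (hg.1.norm.mul (by fun_prop)) (.of_forall fun t => ?_)
    rw [Real.norm_of_nonneg (by positivity)]
    exact hbound w t
  refine ⟨M * ∫ t, q t ∂μ + ∫ t, ‖g t‖ ∂μ, fun w => ⟨hint w, ?_⟩⟩
  calc ∫ t, ‖g t‖ * ‖w - t‖⁻¹ ∂μ ≤ ∫ t, (M * q (w - t) + ‖g t‖) ∂μ :=
        integral_mono (hint w) (hdom w) (hbound w)
    _ = M * ∫ t, q t ∂μ + ∫ t, ‖g t‖ ∂μ := by
        rw [integral_add ((hq.comp_sub_left w).const_mul M) hg.norm, integral_const_mul,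
          integral_sub_left_eq_self]

namespace HasLogSingularity

variable {f : E → F} {ρ : E → ℝ} {A K R : ℝ}

theorem locallyIntegrable (hf : HasLogSingularity f A) (hE : 2 ≤ finrank ℝ E) :
    LocallyIntegrable f μ := by
  have : Nontrivial E := nontrivial_of_finrank_pos (R := ℝ) (by omega)
  have hmeas : AEStronglyMeasurable f μ := by
    have hcont : ContinuousOn f {0}ᶜ := fun x hx =>
      (hf.differentiableAt x hx).continuousAt.continuousWithinAt
    simpa using hcont.aestronglyMeasurable (measurableSet_singleton 0).compl (μ := μ)
  intro x
  obtain ⟨B, -, hB⟩ := hf.exists_norm_le_div (add_nonneg (norm_nonneg x) zero_le_one)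
  refine ⟨ball 0 (‖x‖ + 1), isOpen_ball.mem_nhds (by simp), ?_⟩
  refine integrableOn_ball_of_norm_le_rpow (C := B) (α := 1) (by omega) (by exact_mod_cast hE) ?_
    hmeas
  filter_upwards [ae_restrict_mem measurableSet_ball, ae_restrict_of_ae (Measure.ae_ne μ 0)]
    with y hy hy0
  rw [Real.rpow_neg_one, ← div_eq_mul_inv]
  exact hB y hy0 (mem_ball_zero_iff.1 hy).le

theorem integrable_smul_comp_sub (hf : HasLogSingularity f A) (hE : 2 ≤ finrank ℝ E)
    (hc : HasCompactSupport ρ) (hρ : Continuous ρ) (w : E) :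
    Integrable (fun t => ρ t • f (w - t)) μ :=
  hc.convolutionExists_left (lsmul ℝ ℝ) hρ (hf.locallyIntegrable hE) w

theorem norm_convolution_sub_le (hf : HasLogSingularity f A) (hE : 2 ≤ finrank ℝ E)
    (hc : HasCompactSupport ρ) (hρ : Continuous ρ)
    (hK : ∀ w, Integrable (fun t => ‖ρ t‖ * ‖w - t‖⁻¹) μ ∧ ∫ t, ‖ρ t‖ * ‖w - t‖⁻¹ ∂μ ≤ K)
    (w z : E) :
    ‖(ρ ⋆[lsmul ℝ ℝ, μ] f) w - (ρ ⋆[lsmul ℝ ℝ, μ] f) z‖ ≤ 2 * A * K * ‖w - z‖ := by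
  have : Nontrivial E := nontrivial_of_finrank_pos (R := ℝ) (by omega)
  have hA := hf.nonneg
  have hconv := hf.integrable_smul_comp_sub hE hc hρ (μ := μ)
  have hbound : ∀ᵐ t ∂μ, ‖ρ t • f (w - t) - ρ t • f (z - t)‖
      ≤ A * ‖w - z‖ * (‖ρ t‖ * ‖w - t‖⁻¹ + ‖ρ t‖ * ‖z - t‖⁻¹) := by
    filter_upwards [Measure.ae_ne μ w, Measure.ae_ne μ z] with t hw hz
    have h := hf.norm_image_sub_le (w - t) (z - t) (sub_ne_zero.2 hw.symm) (sub_ne_zero.2 hz.symm)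
    rw [sub_sub_sub_cancel_right] at h
    rw [← smul_sub, norm_smul]
    refine (mul_le_mul_of_nonneg_left h (norm_nonneg _)).trans_eq (by ring)
  rw [convolution_lsmul, convolution_lsmul, ← integral_sub (hconv w) (hconv z)]
  calc ‖∫ t, (ρ t • f (w - t) - ρ t • f (z - t)) ∂μ‖
      ≤ ∫ t, A * ‖w - z‖ * (‖ρ t‖ * ‖w - t‖⁻¹ + ‖ρ t‖ * ‖z - t‖⁻¹) ∂μ :=
        norm_integral_le_of_norm_le (((hK w).1.add (hK z).1).const_mul _) hbound
    _ = A * ‖w - z‖ * (∫ t, ‖ρ t‖ * ‖w - t‖⁻¹ ∂μ + ∫ t, ‖ρ t‖ * ‖z - t‖⁻¹ ∂μ) := by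
        rw [integral_const_mul, integral_add (hK w).1 (hK z).1]
    _ ≤ A * ‖w - z‖ * (K + K) := by
        gcongr
        exacts [(hK w).2, (hK z).2]
    _ = 2 * A * K * ‖w - z‖ := by ring

theorem differentiableAt_convolution (hf : HasLogSingularity f A) (hE : 2 ≤ finrank ℝ E)
    (hc : HasCompactSupport ρ) (hρ : ContDiff ℝ 1 ρ) (x : E) :
    DifferentiableAt ℝ (ρ ⋆[lsmul ℝ ℝ, μ] f) x :=
  (hc.contDiff_convolution_left (lsmul ℝ ℝ) (n := 1) hρ (hf.locallyIntegrable hE)).differentiable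
    one_ne_zero x

theorem norm_fderiv_sub_convolution_le_near (hf : HasLogSingularity f A) (hE : 2 ≤ finrank ℝ E)
    (hc : HasCompactSupport ρ) (hρ : ContDiff ℝ 1 ρ)
    (hK : ∀ w, Integrable (fun t => ‖ρ t‖ * ‖w - t‖⁻¹) μ ∧ ∫ t, ‖ρ t‖ * ‖w - t‖⁻¹ ∂μ ≤ K) {x : E}
    (hx : x ≠ 0) :
    ‖fderiv ℝ (fun y => f y - (ρ ⋆[lsmul ℝ ℝ, μ] f) y) x‖ ≤ 3 * A / ‖x‖ + 2 * A * K := by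
  have : Nontrivial E := nontrivial_of_finrank_pos (R := ℝ) (by omega)
  have hA := hf.nonneg
  have hK0 : 0 ≤ K := (integral_nonneg fun t => by positivity).trans (hK 0).2
  rw [fderiv_fun_sub (hf.differentiableAt x hx) (hf.differentiableAt_convolution hE hc hρ x)]
  refine (norm_sub_le _ _).trans (add_le_add (hf.norm_fderiv_le hx) ?_)
  exact norm_fderiv_le_of_lip' ℝ (by positivity)
    (.of_forall fun w => hf.norm_convolution_sub_le hE hc hρ.continuous hK w x)

theorem norm_fderiv_sub_convolution_le_far [CompleteSpace F] (hf : HasLogSingularity f A)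
    (hE : 2 ≤ finrank ℝ E) (hρ : Continuous ρ) (hR : 0 ≤ R) (hρR : tsupport ρ ⊆ closedBall 0 R)
    (hρ1 : ∫ t, ρ t ∂μ = 1) {x : E} (hx : x ≠ 0) (hxR : 4 * R ≤ ‖x‖) :
    ‖fderiv ℝ (fun y => f y - (ρ ⋆[lsmul ℝ ℝ, μ] f) y) x‖
      ≤ 4 * A * R * (∫ t, ‖ρ t‖ ∂μ) / ‖x‖ ^ 2 := by
  have : Nontrivial E := ⟨x, 0, hx⟩
  have hA := hf.nonneg
  have hx' : 0 < ‖x‖ := norm_pos_iff.2 hx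
  have hc : HasCompactSupport ρ := .of_support_subset_isCompact (isCompact_closedBall 0 R)
    ((subset_tsupport ρ).trans hρR)
  have hρi : Integrable ρ μ := hρ.integrable_of_hasCompactSupport hc
  have hconv := hf.integrable_smul_comp_sub hE hc hρ (μ := μ)
  have hint (w : E) : Integrable (fun t => ρ t • (f w - f (w - t))) μ := by
    simp only [smul_sub]
    exact (hρi.smul_const (f w)).sub (hconv w)
  have haverage (w : E) :
      f w - (ρ ⋆[lsmul ℝ ℝ, μ] f) w = ∫ t, ρ t • (f w - f (w - t)) ∂μ := by
    simp only [smul_sub]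
    rw [convolution_lsmul, integral_sub (hρi.smul_const (f w)) (hconv w), integral_smul_const, hρ1,
      one_smul]
  refine norm_fderiv_le_of_lip' ℝ (by positivity) ?_
  filter_upwards [ball_mem_nhds x (half_pos hx')] with w hw
  rw [haverage, haverage, ← integral_sub (hint w) (hint x)]
  have hbound (t : E) : ‖ρ t • (f w - f (w - t)) - ρ t • (f x - f (x - t))‖
      ≤ 4 * A * R / ‖x‖ ^ 2 * ‖w - x‖ * ‖ρ t‖ := by
    rw [← smul_sub, norm_smul, mul_comm]
    by_cases ht : t ∈ closedBall 0 R
    · rw [mem_closedBall_zero_iff] at ht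
      gcongr
      refine (hf.norm_sub_comp_sub_sub_le hx (by linarith) hw).trans (by gcongr)
    · rw [image_eq_zero_of_notMem_tsupport (fun h => ht (hρR h)), norm_zero, mul_zero, mul_zero]
  refine (norm_integral_le_of_norm_le (hρi.norm.const_mul _) (.of_forall hbound)).trans_eq ?_
  rw [integral_const_mul]
  ring

end HasLogSingularity

end Mollification

section Interpolation

variable {r S κ : ℝ}

theorem inv_le_mul_rpow (hr : 0 < r) (hS : 1 ≤ S) (hrS : r ≤ S) (hκ : κ ∈ Set.Icc (0 : ℝ) 1) :
    r⁻¹ ≤ S * r ^ (-1 - κ) := by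
  have hrκ : r ^ κ ≤ S :=
    calc r ^ κ ≤ S ^ κ := Real.rpow_le_rpow hr.le hrS hκ.1
      _ ≤ S ^ (1 : ℝ) := Real.rpow_le_rpow_of_exponent_le hS hκ.2
      _ = S := Real.rpow_one S
  calc r⁻¹ = r ^ κ * r ^ (-1 - κ) := by
        rw [← Real.rpow_add hr, add_sub_cancel, Real.rpow_neg_one]
    _ ≤ S * r ^ (-1 - κ) := by gcongr

theorem inv_sq_le_rpow (hr : 1 ≤ r) (hκ : κ ≤ 1) : (r ^ 2)⁻¹ ≤ r ^ (-1 - κ) := by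
  rw [← Real.rpow_natCast, ← Real.rpow_neg (zero_le_one.trans hr)]
  refine Real.rpow_le_rpow_of_exponent_le hr ?_
  push_cast
  linarith

theorem inv_mul_rpow_inv_mul {δ : ℝ} (hδ : 0 < δ) (hr : 0 ≤ r) :
    δ⁻¹ * (δ⁻¹ * r) ^ (-1 - κ) = δ ^ κ * r ^ (-1 - κ) := by
  rw [Real.mul_rpow (by positivity) hr, Real.inv_rpow hδ.le, ← Real.rpow_neg hδ.le, ← mul_assoc,
    ← Real.rpow_neg_one, ← Real.rpow_add hδ]
  ring_nf

end Interpolation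

section Rate

variable {E F : Type*} [NormedAddCommGroup E] [NormedSpace ℝ E] [FiniteDimensional ℝ E]
  [MeasurableSpace E] [BorelSpace E] {μ : Measure E} [μ.IsAddHaarMeasure]
  [NormedAddCommGroup F] [NormedSpace ℝ F]

theorem convolution_comp_inv_smul (f : E → F) (ρ : E → ℝ) {δ : ℝ} (hδ : 0 < δ) (x : E) :
    ((fun y => δ⁻¹ ^ finrank ℝ E * ρ (δ⁻¹ • y)) ⋆[lsmul ℝ ℝ, μ] f) x
      = (ρ ⋆[lsmul ℝ ℝ, μ] fun y => f (δ • y)) (δ⁻¹ • x) := by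
  have h := Measure.integral_comp_smul μ (fun t => ρ t • f (x - δ • t)) δ⁻¹
  simp only [convolution_lsmul, smul_sub, smul_inv_smul₀ hδ.ne', mul_smul, integral_smul] at h ⊢
  rw [h, smul_smul, abs_of_pos (by positivity), inv_pow, inv_inv, inv_mul_cancel₀ (by positivity),
    one_smul]

variable [CompleteSpace F]

theorem exists_norm_fderiv_sub_convolution_le (hE : 2 ≤ finrank ℝ E) {ρ : E → ℝ}
    (hc : HasCompactSupport ρ) (hρ : ContDiff ℝ 1 ρ) (hρ1 : ∫ t, ρ t ∂μ = 1) :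
    ∃ C, ∀ (f : E → F) (A : ℝ), HasLogSingularity f A → ∀ x ≠ 0, ∀ κ ∈ Set.Icc (0 : ℝ) 1,
      ‖fderiv ℝ (fun y => f y - (ρ ⋆[lsmul ℝ ℝ, μ] f) y) x‖ ≤ C * A * ‖x‖ ^ (-1 - κ) := by
  have : Nontrivial E := nontrivial_of_finrank_pos (R := ℝ) (by omega)
  obtain ⟨M, hM⟩ := hc.exists_bound_of_continuous hρ.continuous
  obtain ⟨K, hK⟩ := exists_integral_norm_mul_inv_norm_sub_le hE
    (hρ.continuous.integrable_of_hasCompactSupport hc (μ := μ)) hM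
  have hK0 : 0 ≤ K := (integral_nonneg fun t => by positivity).trans (hK 0).2
  obtain ⟨R, hR, hρR⟩ := hc.isCompact.isBounded.subset_closedBall_lt 1 0
  set I := ∫ t, ‖ρ t‖ ∂μ
  refine ⟨max ((3 + 8 * R * K) * (4 * R)) (4 * R * I), fun f A hf x hx κ hκ => ?_⟩
  have hA := hf.nonneg
  have hx' : 0 < ‖x‖ := norm_pos_iff.2 hx
  obtain hxR | hxR := le_total ‖x‖ (4 * R)
  · calc _ ≤ 3 * A / ‖x‖ + 2 * A * K := hf.norm_fderiv_sub_convolution_le_near hE hc hρ hK hx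
      _ = A * (3 + 2 * ‖x‖ * K) * ‖x‖⁻¹ := by field_simp
      _ ≤ A * (3 + 2 * (4 * R) * K) * (4 * R * ‖x‖ ^ (-1 - κ)) := by
          gcongr
          exact inv_le_mul_rpow hx' (by linarith) hxR hκ
      _ = (3 + 8 * R * K) * (4 * R) * A * ‖x‖ ^ (-1 - κ) := by ring
      _ ≤ _ := by
          gcongr
          exact le_max_left _ _
  · calc _ ≤ 4 * A * R * I / ‖x‖ ^ 2 :=
          hf.norm_fderiv_sub_convolution_le_far hE hρ.continuous (by linarith) hρR hρ1 hx hxR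
      _ = 4 * R * I * A * (‖x‖ ^ 2)⁻¹ := by ring
      _ ≤ 4 * R * I * A * ‖x‖ ^ (-1 - κ) := by
          gcongr
          exact inv_sq_le_rpow (by linarith) hκ.2
      _ ≤ _ := by
          gcongr
          exact le_max_right _ _

theorem exists_norm_fderiv_sub_mollify_le (hE : 2 ≤ finrank ℝ E) {ρ : E → ℝ}
    (hc : HasCompactSupport ρ) (hρ : ContDiff ℝ 1 ρ) (hρ1 : ∫ t, ρ t ∂μ = 1) :
    ∃ C, ∀ (f : E → F) (A : ℝ), HasLogSingularity f A → ∀ x ≠ 0, ∀ δ > 0,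
      ∀ κ ∈ Set.Icc (0 : ℝ) 1,
      ‖fderiv ℝ (fun y =>
          f y - ((fun t => δ⁻¹ ^ finrank ℝ E * ρ (δ⁻¹ • t)) ⋆[lsmul ℝ ℝ, μ] f) y) x‖
        ≤ C * A * δ ^ κ * ‖x‖ ^ (-1 - κ) := by
  obtain ⟨C, hC⟩ := exists_norm_fderiv_sub_convolution_le (F := F) hE hc hρ hρ1
  refine ⟨C, fun f A hf x hx δ hδ κ hκ => ?_⟩
  let g : E → F := fun y => f (δ • y)
  let u : E → F := fun y => g y - (ρ ⋆[lsmul ℝ ℝ, μ] g) y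
  have hrescale : (fun y => f y - ((fun t => δ⁻¹ ^ finrank ℝ E * ρ (δ⁻¹ • t)) ⋆[lsmul ℝ ℝ, μ] f) y)
      = fun y => u (δ⁻¹ • y) := by
    ext y
    rw [convolution_comp_inv_smul f ρ hδ]
    simp only [u, g, smul_inv_smul₀ hδ.ne']
  rw [hrescale, fderiv_comp_smul, norm_smul, Real.norm_of_nonneg (inv_pos.2 hδ).le]
  calc δ⁻¹ * ‖fderiv ℝ u (δ⁻¹ • x)‖ ≤ δ⁻¹ * (C * A * ‖δ⁻¹ • x‖ ^ (-1 - κ)) := by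
        gcongr
        exact hC g A (hf.comp_smul hδ.ne') _ (smul_ne_zero (inv_pos.2 hδ).ne' hx) κ hκ
    _ = C * A * (δ⁻¹ * (δ⁻¹ * ‖x‖) ^ (-1 - κ)) := by
        rw [norm_smul, Real.norm_of_nonneg (inv_pos.2 hδ).le]
        ring
    _ = C * A * δ ^ κ * ‖x‖ ^ (-1 - κ) := by
        rw [inv_mul_rpow_inv_mul hδ (norm_nonneg x)]
        ring

end Rate

section Green

variable {χ ρ : EuclideanSpace ℝ (Fin 2) → ℝ}

theorem exists_hasLogSingularity_Gfun (hc : HasCompactSupport χ) (hχ : ContDiff ℝ 2 χ) :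
    ∃ A, HasLogSingularity (Gfun χ) A := by
  have hG : Gfun χ = fun x => (-(2 * Real.pi)⁻¹ * χ x) • Real.log ‖x‖ := by
    ext x
    rw [Gfun, smul_eq_mul, mul_right_comm]
  rw [hG]
  exact hasLogSingularity_log_norm.exists_cutoff_smul hc.mul_left (contDiff_const.mul hχ)

theorem Gmol_eq_convolution (δ : ℝ) : Gmol χ ρ δ = mollify ρ δ ⋆[lsmul ℝ ℝ] Gfun χ := by
  ext x
  simp only [Gmol, convolution_lsmul, smul_eq_mul, mul_comm]

theorem gradient_difference_bound_green_function_general (hχc : HasCompactSupport χ)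
    (hχ : ContDiff ℝ 2 χ) (hρc : HasCompactSupport ρ) (hρ : ContDiff ℝ 1 ρ) (hρ1 : ∫ x, ρ x = 1) :
    ∃ C > (0 : ℝ), ∀ x ≠ 0, ∀ δ > 0, ∀ κ ∈ Set.Icc (0 : ℝ) 1,
      ‖gradient (fun y => Gfun χ y - Gmol χ ρ δ y) x‖ ≤ C * δ ^ κ * ‖x‖ ^ (-1 - κ) := by
  obtain ⟨A, hA⟩ := exists_hasLogSingularity_Gfun hχc hχ
  obtain ⟨C, hC⟩ := exists_norm_fderiv_sub_mollify_le (F := ℝ)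
    (finrank_euclideanSpace_fin (𝕜 := ℝ) (n := 2)).ge hρc hρ hρ1
  refine ⟨max (C * A) 1, zero_lt_one.trans_le (le_max_right _ _), fun x hx δ hδ κ hκ => ?_⟩
  have h := hC (Gfun χ) A hA x hx δ hδ κ hκ
  rw [gradient, LinearIsometryEquiv.norm_map, Gmol_eq_convolution]
  rw [finrank_euclideanSpace_fin] at h
  refine h.trans ?_
  gcongr
  exact le_max_left _ _

end Green

theorem gradient_difference_bound_green_function
    (χ : EuclideanSpace ℝ (Fin 2) → ℝ)
    (hχsmooth : ContDiff ℝ (⊤ : ℕ∞) χ)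
    (hχrange : ∀ x, χ x ∈ Set.Icc (0:ℝ) 1)
    (hχradial : ∀ x y, ‖x‖ = ‖y‖ → χ x = χ y)
    (hχone : ∀ x, ‖x‖ ≤ 1 → χ x = 1)
    (hχzero : ∀ x, 2 ≤ ‖x‖ → χ x = 0)
    (ρ : EuclideanSpace ℝ (Fin 2) → ℝ)
    (hρsmooth : ContDiff ℝ (⊤ : ℕ∞) ρ)
    (hρeven : ∀ x, ρ (-x) = ρ x)
    (hρsupp : Function.support ρ ⊆ Metric.closedBall 0 1)
    (hρint : ∫ x, ρ x = 1) :
    ∃ C > (0:ℝ), ∀ x : EuclideanSpace ℝ (Fin 2), x ≠ 0 → ∀ δ ∈ Set.Ioc (0:ℝ) 1,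
      ∀ κ' ∈ Set.Ioo (0:ℝ) 1,
      ‖gradient (fun y => Gfun χ y - Gmol χ ρ δ y) x‖
        ≤ C * δ ^ κ' * ‖x‖ ^ (-1 - κ') := by
  have hχc : HasCompactSupport χ := .intro (isCompact_closedBall 0 2) fun x hx =>
    hχzero x (by simpa using (not_le.1 (mem_closedBall_zero_iff.not.1 hx)).le)
  have hρc : HasCompactSupport ρ := .of_support_subset_isCompact (isCompact_closedBall 0 1) hρsupp
  obtain ⟨C, hC0, hC⟩ := gradient_difference_bound_green_function_general hχc
    (hχsmooth.of_le (by norm_cast)) hρc (hρsmooth.of_le (by norm_cast))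
    hρint
  exact ⟨C, hC0, fun x hx δ hδ κ hκ => hC x hx δ hδ.1 κ ⟨hκ.1.le, hκ.2.le⟩⟩
end

section
/- Let c ∈ ℝ, let 0 < c₁ < c₂, let δ* ∈ (0,1/2], and let v be a continuous real-valued function on ([0,δ*] × [0,δ*]) \ {(0,0)} satisfying c₁ log(1/max(δ₁,δ₂)) ≤ v(δ₁,δ₂) ≤ c₂ log(1/max(δ₁,δ₂)) for all (δ₁,δ₂) in its domain. For δ ∈ (0,1) set λ_δ := δ^{1/δ}. Then there exist δ₀ ∈ (0, δ*), R₀ > 0 and a continuous function a : (0,δ₀) → ℝ with |a(δ)| ≤ R₀ δ for all δ ∈ (0,δ₀), such that for every δ ∈ (0,δ₀): c = v(δ,δ) - 2 a(δ) v(δ, λ_δ) + a(δ)² v(λ_δ, λ_δ) - 2 v(δ, 0) + 2 a(δ) v(λ_δ, 0). -/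
/-!
In the unknown `a`, the equation reads `A a² + 2 B a + C = 0` with `A = v(λ, λ)`,
`B = v(λ, 0) - v(δ, λ)` and `C = v(δ, δ) - 2 v(δ, 0) - c`. As `δ → 0`, both `A` and `B` are of
order `log (1/λ)`, whereas `C` is only of order `log (1/δ) = o(log (1/λ))`. Hence the discriminant
`B² - A C` is eventually positive, and the root `-C / (B + √(B² - A C))` is continuous and of order
`C / B`, that is `log δ / log λ`, which equals `δ` for `λ = δ ^ (1 / δ)`.
-/

open Set Filter Topology Asymptotics

section SmallRoot

/-- The root of `a x ^ 2 + 2 b x + c` that tends to `-c / (2 b)` as `a → 0`, for `0 < b`. The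
rationalised form makes sense for `a = 0` too. -/
noncomputable def smallRoot (a b c : ℝ) : ℝ :=
  -c / (b + √(b ^ 2 - a * c))

variable {a b c : ℝ}

lemma smallRoot_isRoot (hb : 0 < b) (hdisc : 0 ≤ b ^ 2 - a * c) :
    a * smallRoot a b c ^ 2 + 2 * b * smallRoot a b c + c = 0 := by
  have hsq := Real.sq_sqrt hdisc
  have hden : b + √(b ^ 2 - a * c) ≠ 0 := by positivity
  unfold smallRoot
  generalize √(b ^ 2 - a * c) = d at hsq hden
  field_simp
  linear_combination c * hsq

lemma abs_smallRoot_le (a c : ℝ) (hb : 0 < b) : |smallRoot a b c| ≤ |c / b| := by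
  rw [smallRoot, abs_div, abs_div, abs_neg]
  have hle : |b| ≤ |b + √(b ^ 2 - a * c)| :=
    abs_le_abs_of_nonneg hb.le (le_add_of_nonneg_right (Real.sqrt_nonneg _))
  gcongr

variable {X : Type*} {A B C : X → ℝ}

lemma continuousOn_smallRoot [TopologicalSpace X] {S : Set X} (hA : ContinuousOn A S)
    (hB : ContinuousOn B S) (hC : ContinuousOn C S) (hBpos : ∀ x ∈ S, 0 < B x) :
    ContinuousOn (fun x ↦ smallRoot (A x) (B x) (C x)) S := by
  refine hC.neg.div (hB.add ((hB.pow 2).sub (hA.mul hC)).sqrt) fun x hx ↦ ?_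
  have := hBpos x hx
  positivity

lemma smallRoot_isBigO {l : Filter X} (A C : X → ℝ) (hB : ∀ᶠ x in l, 0 < B x) :
    (fun x ↦ smallRoot (A x) (B x) (C x)) =O[l] fun x ↦ C x / B x :=
  .of_bound' (hB.mono fun x hx ↦ abs_smallRoot_le (A x) (C x) hx)

lemma eventually_discrim_nonneg {l : Filter X} (hA : A =O[l] B) (hC : C =o[l] B) :
    ∀ᶠ x in l, 0 ≤ B x ^ 2 - A x * C x := by
  filter_upwards [(hA.mul_isLittleO hC).eventuallyLE] with x hx
  have hle : |A x * C x| ≤ |B x * B x| := hx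
  rw [abs_mul_self] at hle
  linarith [le_abs_self (A x * C x)]

end SmallRoot

/-- The part on or below the diagonal of the punctured square `[0, s]² \ {0}`. It contains all the
points at which the fixed-point equation evaluates `v`. -/
def wedge (s : ℝ) : Set (ℝ × ℝ) :=
  {p | p.1 ∈ Ioc 0 s ∧ p.2 ∈ Icc 0 p.1}

lemma diag_mem_wedge {s x : ℝ} (hx : x ∈ Ioc 0 s) : (x, x) ∈ wedge s :=
  ⟨hx, hx.1.le, le_rfl⟩

lemma axis_mem_wedge {s x : ℝ} (hx : x ∈ Ioc 0 s) : (x, 0) ∈ wedge s :=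
  ⟨hx, le_rfl, hx.1.le⟩

/-- `v` has a logarithmic singularity at the origin: on `wedge s`, where `max x y = x`, it is
continuous and lies between `c₁ log (1 / max x y)` and `c₂ log (1 / max x y)`. -/
structure HasLogSingularity_s10 (c₁ c₂ s : ℝ) (v : ℝ → ℝ → ℝ) : Prop where
  continuousOn : ContinuousOn (fun p : ℝ × ℝ ↦ v p.1 p.2) (wedge s)
  mem_Icc : ∀ ⦃x y⦄, (x, y) ∈ wedge s →
    v x y ∈ Icc (c₁ * Real.log (1 / x)) (c₂ * Real.log (1 / x))

/-- The coefficient of `a ^ 2` in the fixed-point equation at the scales `δ` and `λ_δ = ℓ δ`. -/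
def quadCoeff (v : ℝ → ℝ → ℝ) (ℓ : ℝ → ℝ) (δ : ℝ) : ℝ :=
  v (ℓ δ) (ℓ δ)

/-- Half the coefficient of `a` in the fixed-point equation at the scales `δ` and `λ_δ = ℓ δ`. -/
def halfLinearCoeff (v : ℝ → ℝ → ℝ) (ℓ : ℝ → ℝ) (δ : ℝ) : ℝ :=
  v (ℓ δ) 0 - v δ (ℓ δ)

/-- The constant coefficient of the fixed-point equation at the scale `δ`. -/
def constCoeff (v : ℝ → ℝ → ℝ) (c δ : ℝ) : ℝ :=
  v δ δ - 2 * v δ 0 - c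

lemma eventually_log_neg {ℓ : ℝ → ℝ} (hmem : ∀ᶠ δ in 𝓝[>] 0, ℓ δ ∈ Ioc 0 δ) :
    ∀ᶠ δ in 𝓝[>] 0, Real.log (ℓ δ) < 0 := by
  filter_upwards [hmem, Ioo_mem_nhdsGT one_pos] with δ hℓδ hδ1
  exact Real.log_neg hℓδ.1 (hℓδ.2.trans_lt hδ1.2)

namespace HasLogSingularity_s10

variable {c₁ c₂ s : ℝ} {v : ℝ → ℝ → ℝ} {ℓ : ℝ → ℝ}

lemma of_square
    (hcont : ContinuousOn (fun p : ℝ × ℝ ↦ v p.1 p.2) ((Icc 0 s ×ˢ Icc 0 s) \ {((0 : ℝ), (0 : ℝ))}))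
    (hbound : ∀ x ∈ Icc 0 s, ∀ y ∈ Icc 0 s, (x, y) ≠ ((0 : ℝ), (0 : ℝ)) →
      c₁ * Real.log (1 / max x y) ≤ v x y ∧ v x y ≤ c₂ * Real.log (1 / max x y)) :
    HasLogSingularity_s10 c₁ c₂ s v := by
  have hsub : wedge s ⊆ (Icc 0 s ×ˢ Icc 0 s) \ {((0 : ℝ), (0 : ℝ))} := by
    rintro ⟨x, y⟩ ⟨hx, hy⟩
    exact ⟨⟨Ioc_subset_Icc_self hx, hy.1, hy.2.trans hx.2⟩,
      fun h ↦ hx.1.ne' (congrArg Prod.fst h)⟩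
  refine ⟨hcont.mono hsub, fun x y hxy ↦ ?_⟩
  have hbd := hbound x (hsub hxy).1.1 y (hsub hxy).1.2 (hsub hxy).2
  rwa [max_eq_left hxy.2.2] at hbd

lemma continuousOn_comp (hv : HasLogSingularity_s10 c₁ c₂ s v) {X : Type*} [TopologicalSpace X]
    {S : Set X} {f g : X → ℝ} (hf : ContinuousOn f S) (hg : ContinuousOn g S)
    (hfg : ∀ x ∈ S, (f x, g x) ∈ wedge s) : ContinuousOn (fun x ↦ v (f x) (g x)) S :=
  hv.continuousOn.comp (hf.prodMk hg) hfg

lemma comp_isBigO_log (hv : HasLogSingularity_s10 c₁ c₂ s v) {X : Type*} {l : Filter X} {f g : X → ℝ}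
    (hfg : ∀ᶠ x in l, (f x, g x) ∈ wedge s) :
    (fun x ↦ v (f x) (g x)) =O[l] fun x ↦ Real.log (f x) := by
  refine .of_bound (max |c₁| |c₂|) (hfg.mono fun x hx ↦ ?_)
  obtain ⟨hlower, hupper⟩ := hv.mem_Icc hx
  calc |v (f x) (g x)|
      ≤ max |c₁ * Real.log (1 / f x)| |c₂ * Real.log (1 / f x)| := abs_le_max_abs_abs hlower hupper
    _ = max |c₁| |c₂| * |Real.log (f x)| := by
      rw [abs_mul, abs_mul, one_div, Real.log_inv, abs_neg, max_mul_of_nonneg _ _ (abs_nonneg _)]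

lemma continuousOn_quadCoeff (hv : HasLogSingularity_s10 c₁ c₂ s v) (hℓ : ContinuousOn ℓ (Ioo 0 s))
    (hmem : ∀ δ ∈ Ioo 0 s, ℓ δ ∈ Ioc 0 δ) : ContinuousOn (quadCoeff v ℓ) (Ioo 0 s) :=
  hv.continuousOn_comp hℓ hℓ fun δ hδ ↦ diag_mem_wedge (Ioc_subset_Ioc_right hδ.2.le (hmem δ hδ))

lemma continuousOn_halfLinearCoeff (hv : HasLogSingularity_s10 c₁ c₂ s v)
    (hℓ : ContinuousOn ℓ (Ioo 0 s)) (hmem : ∀ δ ∈ Ioo 0 s, ℓ δ ∈ Ioc 0 δ) :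
    ContinuousOn (halfLinearCoeff v ℓ) (Ioo 0 s) :=
  (hv.continuousOn_comp hℓ continuousOn_const
    fun δ hδ ↦ axis_mem_wedge (Ioc_subset_Ioc_right hδ.2.le (hmem δ hδ))).sub
  (hv.continuousOn_comp continuousOn_id hℓ
    fun δ hδ ↦ ⟨Ioo_subset_Ioc_self hδ, Ioc_subset_Icc_self (hmem δ hδ)⟩)

lemma continuousOn_constCoeff (hv : HasLogSingularity_s10 c₁ c₂ s v) (c : ℝ) :
    ContinuousOn (constCoeff v c) (Ioo 0 s) :=
  ((hv.continuousOn_comp continuousOn_id continuousOn_id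
    fun _ hδ ↦ diag_mem_wedge (Ioo_subset_Ioc_self hδ)).sub
  (continuousOn_const.mul (hv.continuousOn_comp continuousOn_id continuousOn_const
    fun _ hδ ↦ axis_mem_wedge (Ioo_subset_Ioc_self hδ)))).sub continuousOn_const

lemma quadCoeff_isBigO_log (hv : HasLogSingularity_s10 c₁ c₂ s v) (hs : 0 < s)
    (hmem : ∀ᶠ δ in 𝓝[>] 0, ℓ δ ∈ Ioc 0 δ) :
    quadCoeff v ℓ =O[𝓝[>] 0] fun δ ↦ Real.log (ℓ δ) := by
  refine hv.comp_isBigO_log ?_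
  filter_upwards [Ioo_mem_nhdsGT hs, hmem] with δ hδ hℓδ
  exact diag_mem_wedge (Ioc_subset_Ioc_right hδ.2.le hℓδ)

lemma constCoeff_isBigO_log (hv : HasLogSingularity_s10 c₁ c₂ s v) (hs : 0 < s) (c : ℝ) :
    constCoeff v c =O[𝓝[>] 0] Real.log := by
  have hscale : ∀ᶠ δ in 𝓝[>] 0, δ ∈ Ioc 0 s := Ioc_mem_nhdsGT hs
  have hdiag : (fun δ ↦ v δ δ) =O[𝓝[>] 0] Real.log :=
    hv.comp_isBigO_log (hscale.mono fun _ ↦ diag_mem_wedge)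
  have haxis : (fun δ ↦ v δ 0) =O[𝓝[>] 0] Real.log :=
    hv.comp_isBigO_log (hscale.mono fun _ ↦ axis_mem_wedge)
  have hconst : (fun _ ↦ c) =O[𝓝[>] 0] Real.log :=
    (isLittleO_const_left.2 <| .inr <|
      tendsto_abs_atBot_atTop.comp Real.tendsto_log_nhdsGT_zero).isBigO
  exact (hdiag.sub (haxis.const_mul_left 2)).sub hconst

lemma eventually_le_halfLinearCoeff (hv : HasLogSingularity_s10 c₁ c₂ s v) (hs : 0 < s)
    (hc₁ : 0 < c₁) (hmem : ∀ᶠ δ in 𝓝[>] 0, ℓ δ ∈ Ioc 0 δ)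
    (hlog : Real.log =o[𝓝[>] 0] fun δ ↦ Real.log (ℓ δ)) :
    ∀ᶠ δ in 𝓝[>] 0, c₁ / 2 * |Real.log (ℓ δ)| ≤ halfLinearCoeff v ℓ δ := by
  have hmixed : (fun δ ↦ v δ (ℓ δ)) =o[𝓝[>] 0] fun δ ↦ Real.log (ℓ δ) := by
    refine (hv.comp_isBigO_log ?_).trans_isLittleO hlog
    filter_upwards [Ioo_mem_nhdsGT hs, hmem] with δ hδ hℓδ
    exact ⟨Ioo_subset_Ioc_self hδ, Ioc_subset_Icc_self hℓδ⟩
  filter_upwards [hmixed.bound (half_pos hc₁), Ioo_mem_nhdsGT hs, hmem, eventually_log_neg hmem]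
    with δ hδmixed hδ hℓδ hneg
  have hlower : c₁ * |Real.log (ℓ δ)| ≤ v (ℓ δ) 0 := by
    rw [abs_of_neg hneg, ← Real.log_inv, ← one_div]
    exact (hv.mem_Icc (axis_mem_wedge (Ioc_subset_Ioc_right hδ.2.le hℓδ))).1
  have hupper : v δ (ℓ δ) ≤ c₁ / 2 * |Real.log (ℓ δ)| := (le_abs_self _).trans hδmixed
  unfold halfLinearCoeff
  linarith

lemma eventually_halfLinearCoeff_pos (hv : HasLogSingularity_s10 c₁ c₂ s v) (hs : 0 < s)
    (hc₁ : 0 < c₁) (hmem : ∀ᶠ δ in 𝓝[>] 0, ℓ δ ∈ Ioc 0 δ)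
    (hlog : Real.log =o[𝓝[>] 0] fun δ ↦ Real.log (ℓ δ)) :
    ∀ᶠ δ in 𝓝[>] 0, 0 < halfLinearCoeff v ℓ δ := by
  filter_upwards [hv.eventually_le_halfLinearCoeff hs hc₁ hmem hlog, eventually_log_neg hmem]
    with δ hlower hneg
  have hne : Real.log (ℓ δ) ≠ 0 := hneg.ne
  exact lt_of_lt_of_le (by positivity) hlower

lemma log_isBigO_halfLinearCoeff (hv : HasLogSingularity_s10 c₁ c₂ s v) (hs : 0 < s)
    (hc₁ : 0 < c₁) (hmem : ∀ᶠ δ in 𝓝[>] 0, ℓ δ ∈ Ioc 0 δ)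
    (hlog : Real.log =o[𝓝[>] 0] fun δ ↦ Real.log (ℓ δ)) :
    (fun δ ↦ Real.log (ℓ δ)) =O[𝓝[>] 0] halfLinearCoeff v ℓ := by
  refine .of_bound (2 / c₁) ?_
  filter_upwards [hv.eventually_le_halfLinearCoeff hs hc₁ hmem hlog] with δ hlower
  calc |Real.log (ℓ δ)| = 2 / c₁ * (c₁ / 2 * |Real.log (ℓ δ)|) := by field_simp
    _ ≤ 2 / c₁ * |halfLinearCoeff v ℓ δ| := by
      gcongr
      exact hlower.trans (le_abs_self _)

lemma smallRoot_isBigO_log_div_log (hv : HasLogSingularity_s10 c₁ c₂ s v) (hs : 0 < s)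
    (hc₁ : 0 < c₁) (hmem : ∀ᶠ δ in 𝓝[>] 0, ℓ δ ∈ Ioc 0 δ)
    (hlog : Real.log =o[𝓝[>] 0] fun δ ↦ Real.log (ℓ δ)) (c : ℝ) :
    (fun δ ↦ smallRoot (quadCoeff v ℓ δ) (halfLinearCoeff v ℓ δ) (constCoeff v c δ))
      =O[𝓝[>] 0] fun δ ↦ Real.log δ / Real.log (ℓ δ) := by
  have hinv := (hv.log_isBigO_halfLinearCoeff hs hc₁ hmem hlog).inv_rev
    ((eventually_log_neg hmem).mono fun _ hneg hzero ↦ absurd hzero hneg.ne)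
  refine (smallRoot_isBigO _ _ (hv.eventually_halfLinearCoeff_pos hs hc₁ hmem hlog)).trans ?_
  simpa only [div_eq_mul_inv] using (hv.constCoeff_isBigO_log hs c).mul hinv

end HasLogSingularity_s10

section RpowOneDivSelf

variable {x : ℝ}

lemma rpow_one_div_self_mem_Ioc (hx : x ∈ Ioc 0 1) : x ^ (1 / x) ∈ Ioc 0 x :=
  ⟨Real.rpow_pos_of_pos hx.1 _,
    Real.rpow_le_self_of_le_one hx.1.le hx.2 (one_le_one_div hx.1 hx.2)⟩

lemma continuousOn_rpow_one_div_self : ContinuousOn (fun x : ℝ ↦ x ^ (1 / x)) (Ioi 0) :=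
  continuousOn_id.rpow (continuousOn_const.div continuousOn_id fun _ hx ↦ ne_of_gt hx)
    fun _ hx ↦ .inl (ne_of_gt hx)

lemma log_eq_mul_log_rpow_one_div_self (hx : 0 < x) :
    Real.log x = x * Real.log (x ^ (1 / x)) := by
  rw [Real.log_rpow hx, ← mul_assoc, mul_one_div_cancel hx.ne', one_mul]

lemma log_isLittleO_log_rpow_one_div_self :
    Real.log =o[𝓝[>] 0] fun x ↦ Real.log (x ^ (1 / x)) := by
  have hid : (fun x : ℝ ↦ x) =o[𝓝[>] 0] fun _ ↦ (1 : ℝ) :=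
    (isLittleO_one_iff ℝ).2 (tendsto_id.mono_left nhdsWithin_le_nhds)
  have hmul := hid.mul_isBigO (isBigO_refl (fun x ↦ Real.log (x ^ (1 / x))) (𝓝[>] 0))
  refine hmul.congr' ?_ (.of_eq (funext fun _ ↦ one_mul _))
  filter_upwards [self_mem_nhdsWithin] with x hx
  exact (log_eq_mul_log_rpow_one_div_self hx).symm

lemma abs_log_div_log_rpow_one_div_self (hx : x ∈ Ioo 0 1) :
    |Real.log x / Real.log (x ^ (1 / x))| = x := by
  have hlog := log_eq_mul_log_rpow_one_div_self hx.1
  have hne : Real.log (x ^ (1 / x)) ≠ 0 :=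
    right_ne_zero_of_mul (hlog ▸ (Real.log_neg hx.1 hx.2).ne)
  rw [div_eq_of_eq_mul hne hlog, abs_of_pos hx.1]

end RpowOneDivSelf

theorem renormalisation_constant_fixed_point_general (c : ℝ) {c₁ c₂ s : ℝ} {v : ℝ → ℝ → ℝ}
    {ℓ : ℝ → ℝ} (hv : HasLogSingularity_s10 c₁ c₂ s v) (hc₁ : 0 < c₁) (hs : 0 < s)
    (hℓ : ContinuousOn ℓ (Ioo 0 s)) (hmem : ∀ δ ∈ Ioo 0 s, ℓ δ ∈ Ioc 0 δ)
    (hlog : Real.log =o[𝓝[>] 0] fun δ ↦ Real.log (ℓ δ)) :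
    ∃ δ₀ ∈ Ioo 0 s, ∃ R₀ > (0 : ℝ), ∃ a : ℝ → ℝ,
      ContinuousOn a (Ioo 0 δ₀) ∧
      (∀ δ ∈ Ioo 0 δ₀, |a δ| ≤ R₀ * |Real.log δ / Real.log (ℓ δ)|) ∧
      ∀ δ ∈ Ioo 0 δ₀,
        c = v δ δ - 2 * a δ * v δ (ℓ δ) + a δ ^ 2 * v (ℓ δ) (ℓ δ)
            - 2 * v δ 0 + 2 * a δ * v (ℓ δ) 0 := by
  have hmem' : ∀ᶠ δ in 𝓝[>] 0, ℓ δ ∈ Ioc 0 δ :=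
    eventually_of_mem (Ioo_mem_nhdsGT hs) hmem
  have hBpos := hv.eventually_halfLinearCoeff_pos hs hc₁ hmem' hlog
  have hB := hv.log_isBigO_halfLinearCoeff hs hc₁ hmem' hlog
  have hC := hv.constCoeff_isBigO_log hs c
  have hdisc := eventually_discrim_nonneg ((hv.quadCoeff_isBigO_log hs hmem').trans hB)
    ((hC.trans_isLittleO hlog).trans_isBigO hB)
  obtain ⟨R₀, hR₀, hroot⟩ := (hv.smallRoot_isBigO_log_div_log hs hc₁ hmem' hlog c).exists_pos
  obtain ⟨δ₀, hδ₀, hgood⟩ := (mem_nhdsGT_iff_exists_mem_Ioc_Ioo_subset (half_pos hs)).1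
    (hBpos.and (hdisc.and hroot.bound))
  have hδ₀s : δ₀ < s := by linarith [hδ₀.2]
  have hsub : Ioo 0 δ₀ ⊆ Ioo 0 s := Ioo_subset_Ioo_right hδ₀s.le
  refine ⟨δ₀, ⟨hδ₀.1, hδ₀s⟩, R₀, hR₀,
    fun δ ↦ smallRoot (quadCoeff v ℓ δ) (halfLinearCoeff v ℓ δ) (constCoeff v c δ),
    continuousOn_smallRoot ((hv.continuousOn_quadCoeff hℓ hmem).mono hsub)
      ((hv.continuousOn_halfLinearCoeff hℓ hmem).mono hsub)
      ((hv.continuousOn_constCoeff c).mono hsub) fun δ hδ ↦ (hgood hδ).1,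
    fun δ hδ ↦ (hgood hδ).2.2, fun δ hδ ↦ ?_⟩
  have hquad := smallRoot_isRoot (hgood hδ).1 (hgood hδ).2.1
  simp only [quadCoeff, halfLinearCoeff, constCoeff] at hquad ⊢
  linear_combination -hquad

theorem renormalisation_constant_fixed_point
    (c : ℝ) (c₁ c₂ : ℝ) (hc₁ : 0 < c₁) (hc₁₂ : c₁ < c₂)
    (δstar : ℝ) (hδstar : δstar ∈ Set.Ioc (0:ℝ) (1/2))
    (v : ℝ → ℝ → ℝ)
    (hvcont : ContinuousOn (fun p : ℝ × ℝ => v p.1 p.2)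
      ((Set.Icc 0 δstar ×ˢ Set.Icc 0 δstar) \ {((0:ℝ), (0:ℝ))}))
    (hvbound : ∀ δ₁ ∈ Set.Icc (0:ℝ) δstar, ∀ δ₂ ∈ Set.Icc (0:ℝ) δstar,
      (δ₁, δ₂) ≠ ((0:ℝ), (0:ℝ)) →
      c₁ * Real.log (1 / max δ₁ δ₂) ≤ v δ₁ δ₂ ∧
      v δ₁ δ₂ ≤ c₂ * Real.log (1 / max δ₁ δ₂)) :
    ∃ δ₀ ∈ Set.Ioo (0:ℝ) δstar, ∃ R₀ > (0:ℝ), ∃ a : ℝ → ℝ,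
      ContinuousOn a (Set.Ioo 0 δ₀) ∧
      (∀ δ ∈ Set.Ioo (0:ℝ) δ₀, |a δ| ≤ R₀ * δ) ∧
      ∀ δ ∈ Set.Ioo (0:ℝ) δ₀,
        c = v δ δ - 2 * a δ * v δ (δ ^ (1/δ)) + (a δ) ^ 2 * v (δ ^ (1/δ)) (δ ^ (1/δ))
            - 2 * v δ 0 + 2 * a δ * v (δ ^ (1/δ)) 0 := by
  have hlt_one : ∀ {δ}, δ < δstar → δ < 1 := fun hδ ↦ by linarith [hδstar.2]
  obtain ⟨δ₀, hδ₀, R₀, hR₀, a, hcont, hbound, hroot⟩ :=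
    renormalisation_constant_fixed_point_general c (.of_square hvcont hvbound) hc₁ hδstar.1
      (continuousOn_rpow_one_div_self.mono Ioo_subset_Ioi_self)
      (fun δ hδ ↦ rpow_one_div_self_mem_Ioc ⟨hδ.1, (hlt_one hδ.2).le⟩)
      log_isLittleO_log_rpow_one_div_self
  refine ⟨δ₀, hδ₀, R₀, hR₀, a, hcont, fun δ hδ ↦ ?_, hroot⟩
  simpa only [abs_log_div_log_rpow_one_div_self ⟨hδ.1, hlt_one (hδ.2.trans hδ₀.2)⟩]
    using hbound δ hδ
end
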